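/- Let H > 0, let Ω ⊆ ℝ² be an open connected set, and let (u_n) be a sequence of solutions of (CMC) on Ω. Then the convergence domain B(u_n) = {Q ∈ Ω : the sequence (W_{u_n}(Q))_{n∈ℕ} is bounded} is an open subset of ℝ². -/

import Mathlib

/-!
Openness follows from an interior gradient estimate for solutions on a fixed ball around `Q`: a
bound `W ≤ M` at `Q` gives `W ≤ C` on a smaller ball, where `C` and the smaller radius depend only
on `M`, `H` and the first radius (`exists_Wgraph_le_on_ball`). The same constants serve all `uₙ`.

Write `Y = ∇u / W`, so that the equation reads `div Y = 2H` and the derivative of `Y` is the shape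
operator of the graph. Testing the equation gives a bound `O(r²)` for the area of the graph in
balls of space (`setIntegral_Wgraph_distSq_lt_le`). The Gauss curvature form is exact with bounded
primitives, so the integral of the squared second fundamental form over such a ball is bounded as
well (`setIntegral_sffSq_distSq_lt_le`). A pigeonhole over dyadic annuli and the length-area method
then produce a radius, bounded from below, such that the images under both components of `Y` of the
level curve of the distance from the base point have measure as small as desired
(`exists_level_volume_image_tilt_lt`).

The component of `Q` of the corresponding sublevel set, with its holes filled, is a planar domain
`D` with connected boundary inside that level curve (`exists_isOpen_isPreconnected_frontier`). On a
connected set small measure of the image means small oscillation, so the normal is almost constant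
along the boundary of `D`. The derivatives of `u` in fixed directions obey the maximum principle
(`fderiv_apply_le_of_frontier_le`). If the normal were almost horizontal along the whole boundary,
the derivative in one fixed direction would be large there, hence large at `Q`, against `W ≤ M`. So
the gradient is bounded on the boundary, hence on `D`; and a gradient bound on `D` forces `D` to
contain a ball of controlled radius, because its boundary is far from the base point in space.

All integrations by parts need only `C¹` fields (`integral_fderiv_mul_fderiv_comm`), so no
regularity beyond `C²` is used. A cutoff away from `Q` reduces to functions on the whole plane.
-/

open Real MeasureTheory Filter Set

noncomputable section

/-- Euclidean norm on `ℝ × ℝ`. -/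
def enorm2 (p : ℝ × ℝ) : ℝ := Real.sqrt (p.1 ^ 2 + p.2 ^ 2)

/-- Partial derivative in the `x` direction. -/
def pdx (u : ℝ × ℝ → ℝ) (p : ℝ × ℝ) : ℝ := fderiv ℝ u p (1, 0)

/-- Partial derivative in the `y` direction. -/
def pdy (u : ℝ × ℝ → ℝ) (p : ℝ × ℝ) : ℝ := fderiv ℝ u p (0, 1)

/-- The area element `W_u = √(1 + |∇u|²)`. -/
def Wgraph (u : ℝ × ℝ → ℝ) (p : ℝ × ℝ) : ℝ :=
  Real.sqrt (1 + (pdx u p) ^ 2 + (pdy u p) ^ 2)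

/-- Upward unit normal of the graph of `u`. -/
def normalVec (u : ℝ × ℝ → ℝ) (p : ℝ × ℝ) : ℝ × ℝ × ℝ :=
  (-pdx u p / Wgraph u p, -pdy u p / Wgraph u p, 1 / Wgraph u p)

/-- `u` is a (C²) solution of the constant mean curvature `H` equation on `Ω`. -/
def IsCMCSolution (H : ℝ) (Ω : Set (ℝ × ℝ)) (u : ℝ × ℝ → ℝ) : Prop :=
  ContDiffOn ℝ 2 u Ω ∧ ∀ p ∈ Ω,
    (1 + (pdy u p) ^ 2) * pdx (fun q => pdx u q) p
      - 2 * (pdx u p) * (pdy u p) * pdy (fun q => pdx u q) p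
      + (1 + (pdx u p) ^ 2) * pdy (fun q => pdy u q) p
    = 2 * H * (1 + (pdx u p) ^ 2 + (pdy u p) ^ 2) ^ ((3 : ℝ) / 2)

/-- `C` is a divergence line of the sequence `u` on `Ω`. -/
def IsDivergenceLine (H : ℝ) (Ω : Set (ℝ × ℝ)) (u : ℕ → ℝ × ℝ → ℝ)
    (C : Set (ℝ × ℝ)) : Prop :=
  ∃ z₁ : ℝ × ℝ, C ⊆ Ω ∧ (∀ q ∈ C, enorm2 (q - z₁) = 1 / (2 * H)) ∧
    IsConnected C ∧ C.Nontrivial ∧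
    ∃ φ : ℕ → ℕ, StrictMono φ ∧ ∀ Q ∈ C,
      Tendsto (fun n => normalVec (u (φ n)) Q) atTop
        (nhds (2 * H * (z₁.1 - Q.1), 2 * H * (z₁.2 - Q.2), 0))

/-! ### Planar domains with connected boundary -/

section Topology

variable {X : Type*} [TopologicalSpace X]

lemma frontier_connectedComponentIn_subset [LocallyConnectedSpace X] {F : Set X} {x : X} :
    frontier (connectedComponentIn F x) ⊆ frontier F := by
  intro y hy
  refine ⟨closure_mono (connectedComponentIn_subset F x) hy.1, fun hyF => hy.2 ?_⟩
  obtain ⟨V, ⟨hV, hyV, hVc⟩, hVF⟩ :=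
    (LocallyConnectedSpace.open_connected_basis y).mem_iff.1 (isOpen_interior.mem_nhds hyF)
  obtain ⟨z, hzV, hz⟩ := mem_closure_iff_nhds.1 hy.1 V (hV.mem_nhds hyV)
  refine mem_interior.2 ⟨V, ?_, hV, hyV⟩
  rw [connectedComponentIn_eq hz]
  exact hVc.isPreconnected.subset_connectedComponentIn hzV (hVF.trans interior_subset)

lemma isClosed_connectedComponentIn {F : Set X} (hF : IsClosed F) (x : X) :
    IsClosed (connectedComponentIn F x) := by
  by_cases hx : x ∈ F
  · refine isClosed_of_closure_subset ?_
    exact isPreconnected_connectedComponentIn.closure.subset_connectedComponentIn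
      (subset_closure (mem_connectedComponentIn hx))
      (closure_minimal (connectedComponentIn_subset F x) hF)
  · rw [connectedComponentIn_eq_empty hx]
    exact isClosed_empty

lemma isPreconnected_union_of_compl_eq_union [PreconnectedSpace X] {E A B : Set X}
    (hE : IsPreconnected E) (hA : IsOpen A) (hB : IsOpen B) (hAB : Disjoint A B)
    (hcompl : Eᶜ = A ∪ B) : IsPreconnected (E ∪ B) := by
  have hEB : E ∪ B = Aᶜ := by
    rw [← compl_inj_iff, compl_union, hcompl, compl_compl, union_inter_distrib_right,
      inter_compl_self, union_empty, ← sdiff_eq, hAB.sdiff_eq_left]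
  have hclosed : IsClosed (E ∪ B) := hEB ▸ hA.isClosed_compl
  rw [isPreconnected_iff_subset_of_fully_disjoint_closed hclosed]
  have of_subset : ∀ K₁ K₂ : Set X, IsClosed K₁ → IsClosed K₂ → E ∪ B ⊆ K₁ ∪ K₂ →
      Disjoint K₁ K₂ → E ⊆ K₁ → E ∪ B ⊆ K₁ ∨ E ∪ B ⊆ K₂ := by
    intro K₁ K₂ hK₁ hK₂ hcover hdisj hEK
    have hpiece : (E ∪ B) ∩ K₂ = B ∩ K₁ᶜ := by
      ext x
      constructor
      · rintro ⟨hx, hx₂⟩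
        have hx₁ : x ∉ K₁ := hdisj.notMem_of_mem_right hx₂
        exact ⟨hx.resolve_left fun h => hx₁ (hEK h), hx₁⟩
      · rintro ⟨hx, hx₁⟩
        exact ⟨Or.inr hx, (hcover (Or.inr hx)).resolve_left hx₁⟩
    have hclopen : IsClopen ((E ∪ B) ∩ K₂) :=
      ⟨hclosed.inter hK₂, hpiece ▸ hB.inter hK₁.isOpen_compl⟩
    rcases isClopen_iff.1 hclopen with hempty | huniv
    · exact Or.inl fun x hx => (hcover hx).resolve_right fun h => hempty.le ⟨hx, h⟩
    · exact Or.inr fun x _ => (huniv ▸ mem_univ x : x ∈ (E ∪ B) ∩ K₂).2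
  intro K₁ K₂ hK₁ hK₂ hcover hdisj
  rcases isPreconnected_iff_subset_of_disjoint_closed.1 hE K₁ K₂ hK₁ hK₂
    (subset_union_left.trans hcover) (by rw [hdisj.inter_eq, inter_empty]) with h | h
  · exact of_subset K₁ K₂ hK₁ hK₂ hcover hdisj h
  · exact (of_subset K₂ K₁ hK₂ hK₁ (union_comm K₁ K₂ ▸ hcover) hdisj.symm h).symm

lemma isPreconnected_compl_connectedComponentIn_compl [PreconnectedSpace X] {C : Set X}
    (hC : IsOpen C) (hCc : IsPreconnected C) {z : X} (hz : z ∈ Cᶜ) :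
    IsPreconnected (connectedComponentIn Cᶜ z)ᶜ := by
  set E := connectedComponentIn Cᶜ z
  have hEo : IsOpen Eᶜ := (isClosed_connectedComponentIn hC.isClosed_compl z).isOpen_compl
  have hCE : C ⊆ Eᶜ := subset_compl_comm.1 (connectedComponentIn_subset Cᶜ z)
  have hzE : z ∈ E := mem_connectedComponentIn hz
  -- A piece of `Eᶜ` missing `C` could be adjoined to `E` without losing connectedness.
  have of_subset : ∀ U V : Set X, IsOpen U → IsOpen V → Eᶜ ⊆ U ∪ V → Eᶜ ∩ (U ∩ V) = ∅ →
      C ⊆ U → Eᶜ ⊆ U := by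
    intro U V hU hV hcover hdisj hCU
    have hadjoin : IsPreconnected (E ∪ Eᶜ ∩ V) := by
      refine isPreconnected_union_of_compl_eq_union isPreconnected_connectedComponentIn
        (hEo.inter hU) (hEo.inter hV) ?_ ?_
      · rw [disjoint_iff_inter_eq_empty, ← inter_inter_distrib_left, hdisj]
      · rw [← inter_union_distrib_left, inter_eq_left.2 hcover]
    have hmiss : Eᶜ ∩ V ⊆ Cᶜ := fun x hx hxC => hdisj.le ⟨hx.1, hCU hxC, hx.2⟩
    have hsub : E ∪ Eᶜ ∩ V ⊆ E := hadjoin.subset_connectedComponentIn (Or.inl hzE)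
      (union_subset (connectedComponentIn_subset _ _) hmiss)
    exact fun x hx => (hcover hx).resolve_right fun hxV => hx (hsub (Or.inr ⟨hx, hxV⟩))
  rw [isPreconnected_iff_subset_of_disjoint]
  intro U V hU hV hcover hdisj
  have hdisjC : C ∩ (U ∩ V) = ∅ :=
    subset_empty_iff.1 ((inter_subset_inter_left _ hCE).trans hdisj.le)
  rcases isPreconnected_iff_subset_of_disjoint.1 hCc U V hU hV (hCE.trans hcover) hdisjC with h | h
  · exact Or.inl (of_subset U V hU hV hcover hdisj h)
  · exact Or.inr (of_subset V U hV hU (union_comm U V ▸ hcover) (inter_comm U V ▸ hdisj) h)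

lemma eq_of_coe_addCircle_eq_zero {p : ℝ} {S : Set X} (hS : IsPreconnected S) {g : X → ℝ}
    (hg : Continuous g) (hp : ∀ x ∈ S, (g x : AddCircle p) = 0) {x y : X} (hx : x ∈ closure S)
    (hy : y ∈ closure S) : g x = g y := by
  have hdiscrete : IsDiscrete (AddSubgroup.zmultiples p : Set ℝ) :=
    SetLike.isDiscrete_iff_discreteTopology.2 inferInstance
  have hzero : closure S ⊆ {z | (g z : AddCircle p) = 0} :=
    closure_minimal hp (isClosed_eq ((AddCircle.continuous_mk' p).comp hg) continuous_const)
  exact hS.closure.constant_of_mapsTo hdiscrete hg.continuousOn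
    (fun z hz => (QuotientAddGroup.eq_zero_iff (g z)).1 (hzero hz)) hx hy

/-- The branches `φ` on `D` and `-φ` off `D` glue to a map to the circle. If `ψ` lifts it to the
line, then `ψ - φ` is constant on the closure of `D` and `ψ + φ` on that of the complement. -/
lemma eq_on_frontier_of_coe_addCircle_eq_neg [SimplyConnectedSpace X] [LocallyPathConnectedSpace X]
    {D : Set X} (hD : IsPreconnected D) (hDc : IsPreconnected Dᶜ) {p : ℝ} {φ : X → ℝ}
    (hφ : Continuous φ)
    (hp : ∀ x ∈ frontier D, (φ x : AddCircle p) = ((-φ x : ℝ) : AddCircle p)) {x y : X}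
    (hx : x ∈ frontier D) (hy : y ∈ frontier D) : φ x = φ y := by
  classical
  let f : C(X, AddCircle p) :=
    { toFun := fun z => if z ∈ D then (φ z : AddCircle p) else ((-φ z : ℝ) : AddCircle p)
      continuous_toFun := Continuous.if hp ((AddCircle.continuous_mk' p).comp hφ)
        ((AddCircle.continuous_mk' p).comp hφ.neg) }
  obtain ⟨t, ht⟩ := QuotientAddGroup.mk_surjective (f x)
  obtain ⟨ψ, ⟨-, hψ⟩, -⟩ :=
    (AddCircle.isCoveringMap_coe p).existsUnique_continuousMap_lifts f x t ht
  have hψf : ∀ z, (ψ z : AddCircle p) = f z := congrFun hψ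
  have hin : ψ x - φ x = ψ y - φ y := by
    refine eq_of_coe_addCircle_eq_zero (p := p) (g := fun z => ψ z - φ z) hD (by fun_prop)
      (fun z hz => ?_) hx.1 hy.1
    rw [AddCircle.coe_sub, hψf, sub_eq_zero]
    exact if_pos hz
  have hout : ψ x - -φ x = ψ y - -φ y := by
    refine eq_of_coe_addCircle_eq_zero (p := p) (g := fun z => ψ z - -φ z) hDc (by fun_prop)
      (fun z hz => ?_) (frontier_compl D ▸ hx).1 (frontier_compl D ▸ hy).1
    rw [AddCircle.coe_sub, hψf, sub_eq_zero]
    exact if_neg hz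
  linarith

lemma isPreconnected_frontier_of_compl [NormalSpace X] [SimplyConnectedSpace X]
    [LocallyPathConnectedSpace X] {D : Set X} (hD : IsPreconnected D) (hDc : IsPreconnected Dᶜ) :
    IsPreconnected (frontier D) := by
  rw [isPreconnected_iff_subset_of_fully_disjoint_closed isClosed_frontier]
  intro K₁ K₂ hK₁ hK₂ hcover hdisj
  by_contra! hne
  obtain ⟨⟨x, hx, hxK⟩, ⟨y, hy, hyK⟩⟩ := hne.imp not_subset.1 not_subset.1
  obtain ⟨φ, hφ₀, hφ₁, -⟩ := exists_continuous_zero_one_of_isClosed hK₁ hK₂ hdisj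
  have heq : φ x = φ y := by
    refine eq_on_frontier_of_coe_addCircle_eq_neg (p := 2) hD hDc φ.continuous (fun z hz => ?_)
      hx hy
    rcases hcover hz with h | h
    · rw [hφ₀ h, Pi.zero_apply, neg_zero]
    · rw [hφ₁ h, Pi.one_apply, ← AddCircle.coe_add_period 2 (-1)]
      norm_num
  rw [hφ₁ ((hcover hx).resolve_left hxK), hφ₀ ((hcover hy).resolve_right hyK)] at heq
  exact one_ne_zero heq

end Topology

section NormedSpace

variable {E : Type*} [NormedAddCommGroup E] [NormedSpace ℝ E]

lemma isPreconnected_compl_ball (hE : 1 < Module.rank ℝ E) (x : E) (r : ℝ) :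
    IsPreconnected (Metric.ball x r)ᶜ := by
  rcases le_or_gt r 0 with hr | hr
  · rw [Metric.ball_eq_empty.2 hr, compl_empty]
    exact isPreconnected_univ
  have hpolar : (fun z : ℝ × E => x + z.1 • z.2) '' (Ici r ×ˢ Metric.sphere (0 : E) 1) =
      (Metric.ball x r)ᶜ := by
    ext y
    simp only [mem_image, mem_prod, mem_Ici, mem_sphere_iff_norm, sub_zero, Prod.exists,
      mem_compl_iff, Metric.mem_ball, not_lt, dist_eq_norm]
    constructor
    · rintro ⟨t, v, ⟨ht, hv⟩, rfl⟩
      rw [add_sub_cancel_left, norm_smul, hv, mul_one]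
      exact ht.trans (le_abs_self t)
    · intro hy
      have hpos : ‖y - x‖ ≠ 0 := (hr.trans_le hy).ne'
      refine ⟨‖y - x‖, ‖y - x‖⁻¹ • (y - x), ⟨hy, ?_⟩, ?_⟩
      · rw [norm_smul, norm_inv, norm_norm, inv_mul_cancel₀ hpos]
      · rw [smul_inv_smul₀ hpos, add_sub_cancel]
  rw [← hpolar]
  exact (isPreconnected_Ici.prod (isPreconnected_sphere hE 0 1)).image _ (by fun_prop)

/-- The witness is the component of `x` in `O` with its holes filled. -/
lemma exists_isOpen_isPreconnected_frontier (hE : 1 < Module.rank ℝ E) {O : Set E} (hO : IsOpen O)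
    {x y : E} (hx : x ∈ O) {r : ℝ} (hOr : O ⊆ Metric.ball y r) :
    ∃ D : Set E, IsOpen D ∧ x ∈ D ∧ D ⊆ Metric.ball y r ∧ IsPreconnected (frontier D) ∧
      frontier D ⊆ frontier O := by
  set C := connectedComponentIn O x
  have hC : IsOpen C := hO.connectedComponentIn
  have hball : (Metric.ball y r)ᶜ ⊆ Cᶜ :=
    compl_subset_compl.2 ((connectedComponentIn_subset O x).trans hOr)
  obtain ⟨z, hz⟩ : ((Metric.ball y r)ᶜ).Nonempty := by
    have : Nontrivial E := (rank_pos_iff_nontrivial (R := ℝ)).1 (zero_lt_one.trans hE)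
    by_contra! h
    exact NormedSpace.unbounded_univ ℝ E (compl_empty_iff.1 h ▸ Metric.isBounded_ball)
  set F := connectedComponentIn Cᶜ z
  refine ⟨Fᶜ, (isClosed_connectedComponentIn hC.isClosed_compl z).isOpen_compl,
    fun h => connectedComponentIn_subset Cᶜ z h (mem_connectedComponentIn hx), ?_, ?_, ?_⟩
  · exact compl_subset_comm.1
      ((isPreconnected_compl_ball hE y r).subset_connectedComponentIn hz hball)
  · refine isPreconnected_frontier_of_compl
      (isPreconnected_compl_connectedComponentIn_compl hC isPreconnected_connectedComponentIn
        (hball hz)) ?_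
    rw [compl_compl]
    exact isPreconnected_connectedComponentIn
  · calc frontier Fᶜ = frontier F := frontier_compl F
      _ ⊆ frontier Cᶜ := frontier_connectedComponentIn_subset
      _ = frontier C := frontier_compl C
      _ ⊆ frontier O := frontier_connectedComponentIn_subset

end NormedSpace

/-! ### Integration by parts for `C¹` functions -/

section Parts

variable {E : Type*} [NormedAddCommGroup E] [NormedSpace ℝ E] [MeasurableSpace E] [BorelSpace E]
  {f g : E → ℝ}

lemma hasDerivAt_integral_translate_mul (μ : Measure E) [IsFiniteMeasureOnCompacts μ]
    (hf : ContDiff ℝ 1 f) (hfc : HasCompactSupport f)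
    (hg : Continuous g) (hgc : HasCompactSupport g) (v : E) :
    HasDerivAt (fun t : ℝ => ∫ x, f (x + t • v) * g x ∂μ) (∫ x, fderiv ℝ f x v * g x ∂μ) 0 := by
  have hf' : Continuous fun x => fderiv ℝ f x v :=
    (hf.continuous_fderiv one_ne_zero).clm_apply continuous_const
  have hfcont := hf.continuous
  obtain ⟨C, hC⟩ := (hfc.fderiv_apply ℝ v).exists_bound_of_continuous hf'
  have hderiv := hasDerivAt_integral_of_dominated_loc_of_deriv_le (μ := μ) (s := univ)
    (x₀ := (0 : ℝ)) (F := fun t x => f (x + t • v) * g x)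
    (F' := fun t x => fderiv ℝ f (x + t • v) v * g x)
    (bound := fun x => C * ‖g x‖) univ_mem
    (Eventually.of_forall fun t => (by fun_prop : Continuous _).aestronglyMeasurable)
    ((by fun_prop : Continuous _).integrable_of_hasCompactSupport hgc.mul_left)
    (by fun_prop : Continuous _).aestronglyMeasurable
    (Eventually.of_forall fun x t _ => ?_)
    ((hg.norm.integrable_of_hasCompactSupport hgc.norm).const_mul C)
    (Eventually.of_forall fun x t _ => ?_)
  · simpa only [zero_smul, add_zero] using hderiv.2
  · rw [norm_mul]
    exact mul_le_mul_of_nonneg_right (hC _) (norm_nonneg _)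
  · have hline : HasDerivAt (fun s : ℝ => x + s • v) v t := by
      simpa only [one_smul, id] using ((hasDerivAt_id t).smul_const v).const_add x
    exact ((hf.differentiable one_ne_zero _).hasFDerivAt.comp_hasDerivAt t hline).mul_const (g x)

variable [FiniteDimensional ℝ E] (μ : Measure E) [μ.IsAddHaarMeasure]

lemma integral_translate_mul_fderiv (hf : ContDiff ℝ 1 f) (hg : ContDiff ℝ 1 g)
    (hgc : HasCompactSupport g) (a w : E) :
    ∫ x, f (x + a) * fderiv ℝ g x w ∂μ = -∫ x, g (x - a) * fderiv ℝ f x w ∂μ := by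
  have hfa : ContDiff ℝ 1 fun x => f (x + a) := hf.comp (by fun_prop)
  have hfcont := hf.continuous
  have hgcont := hg.continuous
  have := hf.continuous_fderiv one_ne_zero
  have := hg.continuous_fderiv one_ne_zero
  have hparts := integral_mul_fderiv_eq_neg_fderiv_mul_of_integrable (μ := μ)
    (f := fun x => f (x + a)) (g := g) (v := w) (by
      simp only [fderiv_comp_add_right]
      exact (by fun_prop : Continuous _).integrable_of_hasCompactSupport hgc.mul_left)
    ((by fun_prop : Continuous _).integrable_of_hasCompactSupport (hgc.fderiv_apply ℝ w).mul_left)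
    ((by fun_prop : Continuous _).integrable_of_hasCompactSupport hgc.mul_left)
    (fun x _ => hfa.differentiable one_ne_zero x) (fun x _ => hg.differentiable one_ne_zero x)
  rw [hparts, ← integral_sub_right_eq_self _ a]
  simp only [fderiv_comp_add_right, sub_add_cancel, mul_comm]

lemma integral_fderiv_apply_eq_zero (hf : ContDiff ℝ 1 f) (hfc : HasCompactSupport f) (v : E) :
    ∫ x, fderiv ℝ f x v ∂μ = 0 := by
  simpa using integral_translate_mul_fderiv μ (contDiff_const (c := (1 : ℝ))) hf hfc 0 v

/-- Both sides are derivatives at `t = 0` of `∫ f (x + t v) ∂_w g`, the right one after an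
integration by parts; hence no second derivatives are needed. -/
lemma integral_fderiv_mul_fderiv_comm (hf : ContDiff ℝ 1 f) (hfc : HasCompactSupport f)
    (hg : ContDiff ℝ 1 g) (hgc : HasCompactSupport g) (v w : E) :
    ∫ x, fderiv ℝ f x v * fderiv ℝ g x w ∂μ = ∫ x, fderiv ℝ f x w * fderiv ℝ g x v ∂μ := by
  have hleft := hasDerivAt_integral_translate_mul μ hf hfc
    ((hg.continuous_fderiv one_ne_zero).clm_apply continuous_const) (hgc.fderiv_apply ℝ w) v
  have hright := hasDerivAt_integral_translate_mul μ hg hgc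
    ((hf.continuous_fderiv one_ne_zero).clm_apply continuous_const) (hfc.fderiv_apply ℝ w) (-v)
  have hneg : (fun t : ℝ => ∫ x, f (x + t • v) * fderiv ℝ g x w ∂μ) =
      fun t : ℝ => -∫ x, g (x + t • -v) * fderiv ℝ f x w ∂μ := by
    funext t
    rw [integral_translate_mul_fderiv μ hf hg hgc]
    simp only [smul_neg, sub_eq_add_neg]
  rw [hneg] at hleft
  rw [hleft.unique hright.neg, ← integral_neg]
  exact integral_congr_ae (Eventually.of_forall fun x => by
    simp only [map_neg]
    ring)

end Parts

/-! ### Partial derivatives and Jacobians in the plane -/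

section Planar

variable {f g h : ℝ × ℝ → ℝ} {x : ℝ × ℝ}

lemma continuous_pdx (hf : ContDiff ℝ 1 f) : Continuous (pdx f) :=
  (hf.continuous_fderiv one_ne_zero).clm_apply continuous_const

lemma continuous_pdy (hf : ContDiff ℝ 1 f) : Continuous (pdy f) :=
  (hf.continuous_fderiv one_ne_zero).clm_apply continuous_const

lemma contDiff_pdx (hf : ContDiff ℝ 2 f) : ContDiff ℝ 1 (pdx f) :=
  (hf.fderiv_right (m := 1) (by norm_num)).clm_apply contDiff_const

lemma contDiff_pdy (hf : ContDiff ℝ 2 f) : ContDiff ℝ 1 (pdy f) :=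
  (hf.fderiv_right (m := 1) (by norm_num)).clm_apply contDiff_const

lemma hasCompactSupport_pdx (hf : HasCompactSupport f) : HasCompactSupport (pdx f) :=
  hf.fderiv_apply (𝕜 := ℝ) (1, 0)

lemma hasCompactSupport_pdy (hf : HasCompactSupport f) : HasCompactSupport (pdy f) :=
  hf.fderiv_apply (𝕜 := ℝ) (0, 1)

lemma fderiv_apply_eq_pdx_pdy (f : ℝ × ℝ → ℝ) (x e : ℝ × ℝ) :
    fderiv ℝ f x e = e.1 * pdx f x + e.2 * pdy f x := by
  have he : e = e.1 • ((1 : ℝ), (0 : ℝ)) + e.2 • ((0 : ℝ), (1 : ℝ)) := by ext <;> simp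
  conv_lhs => rw [he, map_add, map_smul, map_smul]
  rfl

lemma pdx_mul (hf : DifferentiableAt ℝ f x) (hg : DifferentiableAt ℝ g x) :
    pdx (fun z => f z * g z) x = f x * pdx g x + g x * pdx f x := by
  simp [pdx, fderiv_fun_mul hf hg]

lemma pdy_mul (hf : DifferentiableAt ℝ f x) (hg : DifferentiableAt ℝ g x) :
    pdy (fun z => f z * g z) x = f x * pdy g x + g x * pdy f x := by
  simp [pdy, fderiv_fun_mul hf hg]

lemma fderiv_scalar_comp_apply {E : Type*} [NormedAddCommGroup E] [NormedSpace ℝ E] {f : E → ℝ}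
    {x : E} {c : ℝ → ℝ} {c' : ℝ} (hc : HasDerivAt c c' (f x)) (hf : DifferentiableAt ℝ f x)
    (v : E) : fderiv ℝ (fun z => c (f z)) x v = c' * fderiv ℝ f x v := by
  have hcomp : HasFDerivAt (fun z => c (f z)) (c' • fderiv ℝ f x) x :=
    hc.comp_hasFDerivAt x hf.hasFDerivAt
  rw [hcomp.fderiv]
  rfl

lemma fderiv_fderiv_apply_comm {E : Type*} [NormedAddCommGroup E] [NormedSpace ℝ E] {f : E → ℝ}
    (hf : ContDiff ℝ 2 f) (x v w : E) :
    fderiv ℝ (fun z => fderiv ℝ f z v) x w = fderiv ℝ (fun z => fderiv ℝ f z w) x v := by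
  have hsymm : IsSymmSndFDerivAt ℝ f x := hf.contDiffAt.isSymmSndFDerivAt (by simp)
  have hd : DifferentiableAt ℝ (fderiv ℝ f) x :=
    ((hf.fderiv_right (m := 1) (by norm_num)).differentiable one_ne_zero) x
  have happly (v w : E) :
      fderiv ℝ (fun z => fderiv ℝ f z v) x w = fderiv ℝ (fderiv ℝ f) x w v := by
    simp [(hd.hasFDerivAt.clm_apply (hasFDerivAt_const v x)).fderiv]
  exact (happly _ _).trans ((hsymm _ _).trans (happly _ _).symm)

lemma pdx_pdy_comm (hf : ContDiff ℝ 2 f) (x : ℝ × ℝ) : pdx (pdy f) x = pdy (pdx f) x :=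
  fderiv_fderiv_apply_comm hf x _ _

/-- The Jacobian determinant of the pair `(f, g)`, that is, the density of `df ∧ dg`. -/
def jacobian (f g : ℝ × ℝ → ℝ) (x : ℝ × ℝ) : ℝ := pdx f x * pdy g x - pdy f x * pdx g x

lemma jacobian_swap (f g : ℝ × ℝ → ℝ) (x : ℝ × ℝ) : jacobian f g x = -jacobian g f x := by
  simp only [jacobian]
  ring

lemma jacobian_mul_left (hf : DifferentiableAt ℝ f x) (hg : DifferentiableAt ℝ g x) :
    jacobian (fun z => f z * g z) h x = f x * jacobian g h x + g x * jacobian f h x := by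
  rw [jacobian, pdx_mul hf hg, pdy_mul hf hg, jacobian, jacobian]
  ring

lemma jacobian_mul_right (hg : DifferentiableAt ℝ g x) (hh : DifferentiableAt ℝ h x) :
    jacobian f (fun z => g z * h z) x = g x * jacobian f h x + h x * jacobian f g x := by
  rw [jacobian_swap, jacobian_mul_left hg hh, jacobian_swap f h, jacobian_swap f g]
  ring

lemma jacobian_scalar_comp_left {c : ℝ → ℝ} {c' : ℝ} (hc : HasDerivAt c c' (f x))
    (hf : DifferentiableAt ℝ f x) :
    jacobian (fun z => c (f z)) g x = c' * jacobian f g x := by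
  simp only [jacobian, pdx, pdy, fderiv_scalar_comp_apply hc hf]
  ring

lemma continuous_jacobian (hf : ContDiff ℝ 1 f) (hg : ContDiff ℝ 1 g) :
    Continuous (jacobian f g) :=
  ((continuous_pdx hf).mul (continuous_pdy hg)).sub ((continuous_pdy hf).mul (continuous_pdx hg))

lemma hasCompactSupport_jacobian_left (hf : HasCompactSupport f) :
    HasCompactSupport (jacobian f g) :=
  (hasCompactSupport_pdx hf).mul_right.sub (hasCompactSupport_pdy hf).mul_right

lemma integral_jacobian_eq_zero (hf : ContDiff ℝ 1 f) (hfc : HasCompactSupport f)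
    (hg : ContDiff ℝ 1 g) (hgc : HasCompactSupport g) : ∫ x, jacobian f g x = 0 := by
  have hxy : Integrable fun x => pdx f x * pdy g x :=
    ((continuous_pdx hf).mul (continuous_pdy hg)).integrable_of_hasCompactSupport
      (hasCompactSupport_pdx hfc).mul_right
  have hyx : Integrable fun x => pdy f x * pdx g x :=
    ((continuous_pdy hf).mul (continuous_pdx hg)).integrable_of_hasCompactSupport
      (hasCompactSupport_pdy hfc).mul_right
  exact (integral_sub hxy hyx).trans
    (sub_eq_zero.2 (integral_fderiv_mul_fderiv_comm volume hf hfc hg hgc (1, 0) (0, 1)))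

end Planar

/-! ### A `C¹` cutoff profile -/

lemma hasDerivAt_posPart_sq (t : ℝ) : HasDerivAt (fun s : ℝ => max s 0 ^ 2) (2 * max t 0) t := by
  rcases lt_trichotomy t 0 with ht | rfl | ht
  · have hzero : (fun s : ℝ => max s 0 ^ 2) =ᶠ[nhds t] fun _ => 0 := by
      filter_upwards [gt_mem_nhds ht] with s hs
      simp [max_eq_right hs.le]
    simpa [max_eq_right ht.le] using (hasDerivAt_const t (0 : ℝ)).congr_of_eventuallyEq hzero
  · rw [max_self, mul_zero, hasDerivAt_iff_isLittleO_nhds_zero]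
    have hpow : (fun s : ℝ => s ^ 2) =o[nhds 0] fun s : ℝ => s := by
      simpa using Asymptotics.isLittleO_pow_id (𝕜 := ℝ) (n := 2) (by norm_num)
    refine Asymptotics.IsBigO.trans_isLittleO
      (Asymptotics.IsBigO.of_bound 1 (Eventually.of_forall fun s => ?_)) hpow
    rcases le_total s 0 with hs | hs <;> simp [hs, sq_nonneg]
  · have hsq : (fun s : ℝ => max s 0 ^ 2) =ᶠ[nhds t] fun s => s ^ 2 := by
      filter_upwards [lt_mem_nhds ht] with s hs
      rw [max_eq_left hs.le]
    simpa [max_eq_left ht.le] using (hasDerivAt_pow 2 t).congr_of_eventuallyEq hsq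

lemma contDiff_posPart_sq : ContDiff ℝ 1 (fun s : ℝ => max s 0 ^ 2) := by
  rw [contDiff_one_iff_deriv]
  refine ⟨fun t => (hasDerivAt_posPart_sq t).differentiableAt, ?_⟩
  rw [show deriv (fun s : ℝ => max s 0 ^ 2) = fun t => 2 * max t 0 from
    funext fun t => (hasDerivAt_posPart_sq t).deriv]
  fun_prop

/-! ### Curvature of graphs -/

section Graph

/-- First component of the vector field `∇u / W`, the horizontal part of the downward unit
normal. -/
def tiltX (u : ℝ × ℝ → ℝ) (x : ℝ × ℝ) : ℝ := pdx u x / Wgraph u x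

/-- Second component of the vector field `∇u / W`, the horizontal part of the downward unit
normal. -/
def tiltY (u : ℝ × ℝ → ℝ) (x : ℝ × ℝ) : ℝ := pdy u x / Wgraph u x

/-- Mean curvature of the graph of `u`, half the divergence of `∇u / W`. -/
def meanCurvature (u : ℝ × ℝ → ℝ) (x : ℝ × ℝ) : ℝ := (pdx (tiltX u) x + pdy (tiltY u) x) / 2

/-- Gauss curvature of the graph of `u`: the derivative of `∇u / W` is the shape operator in the
coordinates of the plane. -/
def gaussCurvature (u : ℝ × ℝ → ℝ) : ℝ × ℝ → ℝ := jacobian (tiltX u) (tiltY u)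

/-- Squared norm of the second fundamental form of the graph of `u`: the trace of the square of the
shape operator. -/
def sffSq (u : ℝ × ℝ → ℝ) (x : ℝ × ℝ) : ℝ :=
  pdx (tiltX u) x ^ 2 + 2 * (pdy (tiltX u) x * pdx (tiltY u) x) + pdy (tiltY u) x ^ 2

/-- `W_u ^ 2` times the squared norm of the gradient of `f` for the metric induced on the graph of
`u`. -/
def surfaceGradSq (u f : ℝ × ℝ → ℝ) (x : ℝ × ℝ) : ℝ :=
  pdx f x ^ 2 + pdy f x ^ 2 + jacobian f u x ^ 2

variable {u : ℝ × ℝ → ℝ}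

lemma one_le_Wgraph (u : ℝ × ℝ → ℝ) (x : ℝ × ℝ) : 1 ≤ Wgraph u x := by
  rw [Wgraph, Real.one_le_sqrt]
  nlinarith only [sq_nonneg (pdx u x), sq_nonneg (pdy u x)]

lemma Wgraph_pos (u : ℝ × ℝ → ℝ) (x : ℝ × ℝ) : 0 < Wgraph u x :=
  one_pos.trans_le (one_le_Wgraph u x)

lemma Wgraph_sq (u : ℝ × ℝ → ℝ) (x : ℝ × ℝ) :
    Wgraph u x ^ 2 = 1 + pdx u x ^ 2 + pdy u x ^ 2 := by
  rw [Wgraph, Real.sq_sqrt (by positivity)]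

lemma tiltX_mul_Wgraph (u : ℝ × ℝ → ℝ) (x : ℝ × ℝ) : tiltX u x * Wgraph u x = pdx u x :=
  div_mul_cancel₀ _ (Wgraph_pos u x).ne'

lemma tiltY_mul_Wgraph (u : ℝ × ℝ → ℝ) (x : ℝ × ℝ) : tiltY u x * Wgraph u x = pdy u x :=
  div_mul_cancel₀ _ (Wgraph_pos u x).ne'

lemma Wgraph_sq_mul_one_sub_tilt_sq (u : ℝ × ℝ → ℝ) (x : ℝ × ℝ) :
    Wgraph u x ^ 2 * (1 - tiltX u x ^ 2 - tiltY u x ^ 2) = 1 := by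
  have hsq := Wgraph_sq u x
  rw [← tiltX_mul_Wgraph, ← tiltY_mul_Wgraph] at hsq
  linear_combination hsq

lemma grad_mul_tilt (u : ℝ × ℝ → ℝ) (x : ℝ × ℝ) :
    pdx u x * tiltX u x + pdy u x * tiltY u x = Wgraph u x - 1 / Wgraph u x := by
  have hW := (Wgraph_pos u x).ne'
  have hsq := Wgraph_sq u x
  rw [tiltX, tiltY]
  field_simp
  linarith

lemma tiltX_sq_add_tiltY_sq_le_one (u : ℝ × ℝ → ℝ) (x : ℝ × ℝ) :
    tiltX u x ^ 2 + tiltY u x ^ 2 ≤ 1 := by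
  have hpos : 0 < 1 - tiltX u x ^ 2 - tiltY u x ^ 2 :=
    pos_of_mul_pos_right (by rw [Wgraph_sq_mul_one_sub_tilt_sq]; exact one_pos) (sq_nonneg _)
  linarith

lemma abs_tiltX_le_one (u : ℝ × ℝ → ℝ) (x : ℝ × ℝ) : |tiltX u x| ≤ 1 :=
  (sq_le_one_iff_abs_le_one _).1
    (le_of_add_le_of_nonneg_left (tiltX_sq_add_tiltY_sq_le_one u x) (sq_nonneg _))

lemma abs_tiltY_le_one (u : ℝ × ℝ → ℝ) (x : ℝ × ℝ) : |tiltY u x| ≤ 1 :=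
  (sq_le_one_iff_abs_le_one _).1
    (le_of_add_le_of_nonneg_right (tiltX_sq_add_tiltY_sq_le_one u x) (sq_nonneg _))

lemma hasCompactSupport_tiltX (hu : HasCompactSupport u) : HasCompactSupport (tiltX u) := by
  unfold tiltX
  simp only [div_eq_mul_inv]
  exact (hasCompactSupport_pdx hu).mul_right

lemma hasCompactSupport_tiltY (hu : HasCompactSupport u) : HasCompactSupport (tiltY u) := by
  unfold tiltY
  simp only [div_eq_mul_inv]
  exact (hasCompactSupport_pdy hu).mul_right

lemma sffSq_eq (u : ℝ × ℝ → ℝ) (x : ℝ × ℝ) :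
    sffSq u x = 4 * meanCurvature u x ^ 2 - 2 * gaussCurvature u x := by
  rw [sffSq, meanCurvature, gaussCurvature, jacobian]
  ring

lemma contDiff_Wgraph (hu : ContDiff ℝ 2 u) : ContDiff ℝ 1 (Wgraph u) := by
  have hp := contDiff_pdx hu
  have hq := contDiff_pdy hu
  exact ContDiff.sqrt (by fun_prop) fun x => by positivity

lemma contDiff_tiltX (hu : ContDiff ℝ 2 u) : ContDiff ℝ 1 (tiltX u) :=
  (contDiff_pdx hu).div (contDiff_Wgraph hu) fun x => (Wgraph_pos u x).ne'

lemma contDiff_tiltY (hu : ContDiff ℝ 2 u) : ContDiff ℝ 1 (tiltY u) :=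
  (contDiff_pdy hu).div (contDiff_Wgraph hu) fun x => (Wgraph_pos u x).ne'

lemma continuous_sffSq (hu : ContDiff ℝ 2 u) : Continuous (sffSq u) := by
  have hXx := continuous_pdx (contDiff_tiltX hu)
  have hXy := continuous_pdy (contDiff_tiltX hu)
  have hYx := continuous_pdx (contDiff_tiltY hu)
  have hYy := continuous_pdy (contDiff_tiltY hu)
  unfold sffSq
  fun_prop

lemma fderiv_Wgraph_mul_Wgraph (hu : ContDiff ℝ 2 u) (x e : ℝ × ℝ) :
    fderiv ℝ (Wgraph u) x e * Wgraph u x =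
      pdx u x * fderiv ℝ (pdx u) x e + pdy u x * fderiv ℝ (pdy u) x e := by
  have hp := ((contDiff_pdx hu).differentiable one_ne_zero x).hasFDerivAt.pow 2
  have hq := ((contDiff_pdy hu).differentiable one_ne_zero x).hasFDerivAt.pow 2
  have hW := (((hp.const_add 1).add hq).sqrt (by simp only [Pi.add_apply]; positivity))
  have hWpos := (Wgraph_pos u x).ne'
  rw [show fderiv ℝ (Wgraph u) x = _ from HasFDerivAt.fderiv hW]
  rw [Wgraph] at hWpos ⊢
  simp only [Pi.add_apply, Nat.add_one_sub_one, pow_one, nsmul_eq_mul, Nat.cast_ofNat, smul_add,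
    add_apply, smul_apply, smul_eq_mul]
  field_simp

lemma fderiv_pd_eq (hu : ContDiff ℝ 2 u) (x e : ℝ × ℝ) :
    fderiv ℝ (pdx u) x e =
      tiltX u x * fderiv ℝ (Wgraph u) x e + Wgraph u x * fderiv ℝ (tiltX u) x e ∧
    fderiv ℝ (pdy u) x e =
      tiltY u x * fderiv ℝ (Wgraph u) x e + Wgraph u x * fderiv ℝ (tiltY u) x e := by
  have hW := (contDiff_Wgraph hu).differentiable one_ne_zero x
  have hX := fderiv_fun_mul ((contDiff_tiltX hu).differentiable one_ne_zero x) hW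
  have hY := fderiv_fun_mul ((contDiff_tiltY hu).differentiable one_ne_zero x) hW
  simp only [tiltX_mul_Wgraph, tiltY_mul_Wgraph] at hX hY
  exact ⟨by simpa using congrArg (fun L => L e) hX, by simpa using congrArg (fun L => L e) hY⟩

lemma fderiv_Wgraph_apply (hu : ContDiff ℝ 2 u) (x e : ℝ × ℝ) :
    fderiv ℝ (Wgraph u) x e = Wgraph u x ^ 2 *
      (pdx u x * fderiv ℝ (tiltX u) x e + pdy u x * fderiv ℝ (tiltY u) x e) := by
  obtain ⟨hp, hq⟩ := fderiv_pd_eq hu x e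
  have hW := fderiv_Wgraph_mul_Wgraph hu x e
  have htilt := grad_mul_tilt u x
  have hWpos := (Wgraph_pos u x).ne'
  rw [eq_sub_iff_add_eq, ← eq_sub_iff_add_eq', div_eq_iff hWpos] at htilt
  rw [hp, hq] at hW
  linear_combination fderiv ℝ (Wgraph u) x e * htilt + Wgraph u x * hW

lemma fderiv_pdx_apply (hu : ContDiff ℝ 2 u) (x e : ℝ × ℝ) :
    fderiv ℝ (pdx u) x e = Wgraph u x * ((1 + pdx u x ^ 2) * fderiv ℝ (tiltX u) x e +
      pdx u x * pdy u x * fderiv ℝ (tiltY u) x e) := by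
  rw [(fderiv_pd_eq hu x e).1, fderiv_Wgraph_apply hu]
  linear_combination Wgraph u x * (pdx u x * fderiv ℝ (tiltX u) x e +
    pdy u x * fderiv ℝ (tiltY u) x e) * tiltX_mul_Wgraph u x

lemma fderiv_pdy_apply (hu : ContDiff ℝ 2 u) (x e : ℝ × ℝ) :
    fderiv ℝ (pdy u) x e = Wgraph u x * (pdx u x * pdy u x * fderiv ℝ (tiltX u) x e +
      (1 + pdy u x ^ 2) * fderiv ℝ (tiltY u) x e) := by
  rw [(fderiv_pd_eq hu x e).2, fderiv_Wgraph_apply hu]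
  linear_combination Wgraph u x * (pdx u x * fderiv ℝ (tiltX u) x e +
    pdy u x * fderiv ℝ (tiltY u) x e) * tiltY_mul_Wgraph u x

lemma meanCurvature_mul_Wgraph_pow (hu : ContDiff ℝ 2 u) (x : ℝ × ℝ) :
    2 * meanCurvature u x * Wgraph u x ^ 3 =
      (1 + pdy u x ^ 2) * pdx (pdx u) x - 2 * pdx u x * pdy u x * pdy (pdx u) x +
        (1 + pdx u x ^ 2) * pdy (pdy u) x := by
  have hxx : pdx (pdx u) x = _ := fderiv_pdx_apply hu x (1, 0)
  have hxy : pdy (pdx u) x = _ := fderiv_pdx_apply hu x (0, 1)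
  have hyx : pdx (pdy u) x = _ := fderiv_pdy_apply hu x (1, 0)
  have hyy : pdy (pdy u) x = _ := fderiv_pdy_apply hu x (0, 1)
  have hsq := Wgraph_sq u x
  rw [pdx_pdy_comm hu] at hyx
  rw [meanCurvature]
  simp only [← pdx.eq_def, ← pdy.eq_def] at hxx hxy hyx hyy
  linear_combination Wgraph u x * (pdx (tiltX u) x + pdy (tiltY u) x) * hsq
    - (1 + pdy u x ^ 2) * hxx - (1 + pdx u x ^ 2) * hyy + pdx u x * pdy u x * (hxy + hyx)

/-- The shape operator is self-adjoint for the induced metric. -/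
lemma shapeOperator_symm (hu : ContDiff ℝ 2 u) (x : ℝ × ℝ) :
    (1 + pdx u x ^ 2) * pdy (tiltX u) x + pdx u x * pdy u x * pdy (tiltY u) x =
      pdx u x * pdy u x * pdx (tiltX u) x + (1 + pdy u x ^ 2) * pdx (tiltY u) x :=
  mul_left_cancel₀ (Wgraph_pos u x).ne' <| (fderiv_pdx_apply hu x (0, 1)).symm.trans <|
    (pdx_pdy_comm hu x).symm.trans (fderiv_pdy_apply hu x (1, 0))

/-- The third summand on the right is the squared surface gradient of the third component `1 / W`
of the unit normal, up to a factor. -/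
lemma Wgraph_sq_mul_sffSq (hu : ContDiff ℝ 2 u) (x : ℝ × ℝ) :
    Wgraph u x ^ 2 * sffSq u x = surfaceGradSq u (tiltX u) x + surfaceGradSq u (tiltY u) x +
      ((pdx u x * pdx (tiltX u) x + pdy u x * pdx (tiltY u) x) ^ 2 +
        (pdx u x * pdy (tiltX u) x + pdy u x * pdy (tiltY u) x) ^ 2 +
        (pdx u x * jacobian (tiltX u) u x + pdy u x * jacobian (tiltY u) u x) ^ 2) := by
  rw [Wgraph_sq, sffSq]
  simp only [surfaceGradSq, jacobian]
  linear_combination (pdx u x * pdy u x * pdx (tiltX u) x + (1 + pdy u x ^ 2) * pdx (tiltY u) x -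
    ((1 + pdx u x ^ 2) * pdy (tiltX u) x + pdx u x * pdy u x * pdy (tiltY u) x)) *
      shapeOperator_symm hu x

lemma surfaceGradSq_nonneg (u f : ℝ × ℝ → ℝ) (x : ℝ × ℝ) : 0 ≤ surfaceGradSq u f x := by
  unfold surfaceGradSq
  positivity

lemma surfaceGradSq_tiltX_le (hu : ContDiff ℝ 2 u) (x : ℝ × ℝ) :
    surfaceGradSq u (tiltX u) x ≤ Wgraph u x ^ 2 * sffSq u x := by
  rw [Wgraph_sq_mul_sffSq hu, add_assoc]
  exact le_add_of_nonneg_right (add_nonneg (surfaceGradSq_nonneg _ _ _) (by positivity))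

lemma surfaceGradSq_tiltY_le (hu : ContDiff ℝ 2 u) (x : ℝ × ℝ) :
    surfaceGradSq u (tiltY u) x ≤ Wgraph u x ^ 2 * sffSq u x := by
  rw [Wgraph_sq_mul_sffSq hu, add_right_comm]
  exact le_add_of_nonneg_left (add_nonneg (surfaceGradSq_nonneg _ _ _) (by positivity))

lemma sffSq_nonneg (hu : ContDiff ℝ 2 u) (x : ℝ × ℝ) : 0 ≤ sffSq u x :=
  nonneg_of_mul_nonneg_right ((surfaceGradSq_nonneg _ _ _).trans (surfaceGradSq_tiltX_le hu x))
    (pow_pos (Wgraph_pos u x) 2)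

end Graph

/-! ### Extrinsic balls -/

section DistSq

variable {u f : ℝ × ℝ → ℝ} {Q x : ℝ × ℝ} {r : ℝ}

/-- The squared distance in space between the points of the graph of `u` above `Q` and `x`. For
`u = 0` this is the squared distance in the plane. -/
def distSq (u : ℝ × ℝ → ℝ) (Q x : ℝ × ℝ) : ℝ :=
  (x.1 - Q.1) ^ 2 + (x.2 - Q.2) ^ 2 + (u x - u Q) ^ 2

/-- A `C¹` cutoff function with support in `{x | distSq u Q x ≤ (2 * r) ^ 2}`, bounded below by
`9 / 16` on `{x | distSq u Q x < r ^ 2}`. -/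
def cutoff (u : ℝ × ℝ → ℝ) (Q : ℝ × ℝ) (r : ℝ) (x : ℝ × ℝ) : ℝ :=
  max (1 - distSq u Q x / (2 * r) ^ 2) 0 ^ 2

lemma distSq_nonneg (u : ℝ × ℝ → ℝ) (Q x : ℝ × ℝ) : 0 ≤ distSq u Q x := by
  unfold distSq
  positivity

lemma contDiff_distSq (hu : ContDiff ℝ 1 u) (Q : ℝ × ℝ) : ContDiff ℝ 1 (distSq u Q) := by
  unfold distSq
  fun_prop

lemma pdx_distSq (hu : DifferentiableAt ℝ u x) (Q : ℝ × ℝ) :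
    pdx (distSq u Q) x = 2 * (x.1 - Q.1) + 2 * (u x - u Q) * pdx u x := by
  have h := (((hasFDerivAt_fst (𝕜 := ℝ) (p := x)).sub_const Q.1).pow 2).add
    (((hasFDerivAt_snd (𝕜 := ℝ) (p := x)).sub_const Q.2).pow 2) |>.add
    ((hu.hasFDerivAt.sub_const (u Q)).pow 2)
  rw [pdx, show fderiv ℝ (distSq u Q) x = _ from HasFDerivAt.fderiv h]
  simp [pdx]

lemma pdy_distSq (hu : DifferentiableAt ℝ u x) (Q : ℝ × ℝ) :
    pdy (distSq u Q) x = 2 * (x.2 - Q.2) + 2 * (u x - u Q) * pdy u x := by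
  have h := (((hasFDerivAt_fst (𝕜 := ℝ) (p := x)).sub_const Q.1).pow 2).add
    (((hasFDerivAt_snd (𝕜 := ℝ) (p := x)).sub_const Q.2).pow 2) |>.add
    ((hu.hasFDerivAt.sub_const (u Q)).pow 2)
  rw [pdy, show fderiv ℝ (distSq u Q) x = _ from HasFDerivAt.fderiv h]
  simp [pdy]

/-- By Cauchy-Schwarz, as the gradient of `distSq` in space has norm at most `2 r`. -/
lemma abs_jacobian_distSq_le (hu : DifferentiableAt ℝ u x) (hr : 0 ≤ r)
    (hx : distSq u Q x ≤ r ^ 2) :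
    |jacobian (distSq u Q) f x| ≤ 2 * r * √(surfaceGradSq u f x) := by
  refine abs_le_of_sq_le_sq ?_ (by positivity)
  rw [mul_pow, Real.sq_sqrt (surfaceGradSq_nonneg _ _ _), mul_pow]
  refine le_trans ?_ (mul_le_mul_of_nonneg_right (mul_le_mul_of_nonneg_left hx (by positivity))
    (surfaceGradSq_nonneg _ _ _))
  rw [jacobian, pdx_distSq hu, pdy_distSq hu, distSq, surfaceGradSq, jacobian]
  set X := x.1 - Q.1
  set Y := x.2 - Q.2
  set Z := u x - u Q
  have hcross : 0 ≤ (X * pdx f x + Y * pdy f x) ^ 2 +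
      (X * (pdx f x * pdy u x - pdy f x * pdx u x) + Z * pdy f x) ^ 2 +
      (Y * (pdx f x * pdy u x - pdy f x * pdx u x) - Z * pdx f x) ^ 2 := by positivity
  linear_combination 4 * hcross

lemma distSq_lt_subset_ball (hr : 0 ≤ r) : {x | distSq u Q x < r ^ 2} ⊆ Metric.ball Q r := by
  intro x (hx : distSq u Q x < r ^ 2)
  unfold distSq at hx
  rw [Metric.mem_ball, Prod.dist_eq, max_lt_iff, Real.dist_eq, Real.dist_eq]
  exact ⟨abs_lt_of_sq_lt_sq (by nlinarith only [hx, sq_nonneg (x.2 - Q.2), sq_nonneg (u x - u Q)])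
      hr, abs_lt_of_sq_lt_sq
      (by nlinarith only [hx, sq_nonneg (x.1 - Q.1), sq_nonneg (u x - u Q)]) hr⟩

lemma isOpen_distSq_lt (hu : Continuous u) (Q : ℝ × ℝ) (s : ℝ) :
    IsOpen {x | distSq u Q x < s} := by
  unfold distSq
  exact isOpen_lt (by fun_prop) continuous_const

lemma integrableOn_distSq_lt (hf : Continuous f) (u : ℝ × ℝ → ℝ) (Q : ℝ × ℝ) (hr : 0 ≤ r) :
    IntegrableOn f {x | distSq u Q x < r ^ 2} :=
  (hf.continuousOn.integrableOn_compact (isCompact_closedBall Q r)).mono_set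
    ((distSq_lt_subset_ball hr).trans Metric.ball_subset_closedBall)

lemma contDiff_cutoff (hu : ContDiff ℝ 1 u) (Q : ℝ × ℝ) (r : ℝ) :
    ContDiff ℝ 1 (cutoff u Q r) :=
  contDiff_posPart_sq.comp (contDiff_const.sub ((contDiff_distSq hu Q).div_const _))

lemma cutoff_nonneg (u : ℝ × ℝ → ℝ) (Q : ℝ × ℝ) (r : ℝ) (x : ℝ × ℝ) : 0 ≤ cutoff u Q r x :=
  sq_nonneg _

lemma max_one_sub_distSq_le_one (u : ℝ × ℝ → ℝ) (Q : ℝ × ℝ) (r : ℝ) (x : ℝ × ℝ) :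
    max (1 - distSq u Q x / (2 * r) ^ 2) 0 ≤ 1 :=
  max_le (sub_le_self _ (div_nonneg (distSq_nonneg _ _ _) (sq_nonneg _))) zero_le_one

lemma cutoff_le_one (u : ℝ × ℝ → ℝ) (Q : ℝ × ℝ) (r : ℝ) (x : ℝ × ℝ) : cutoff u Q r x ≤ 1 :=
  pow_le_one₀ (le_max_right _ _) (max_one_sub_distSq_le_one u Q r x)

lemma max_one_sub_distSq_eq_zero (hr : 0 < r) (hx : (2 * r) ^ 2 ≤ distSq u Q x) :
    max (1 - distSq u Q x / (2 * r) ^ 2) 0 = 0 :=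
  max_eq_right (sub_nonpos.2 ((one_le_div (by positivity)).2 hx))

lemma cutoff_eq_zero (hr : 0 < r) (hx : (2 * r) ^ 2 ≤ distSq u Q x) : cutoff u Q r x = 0 := by
  rw [cutoff, max_one_sub_distSq_eq_zero hr hx, zero_pow two_ne_zero]

lemma le_cutoff (hr : 0 < r) (hx : distSq u Q x < r ^ 2) : 9 / 16 ≤ cutoff u Q r x := by
  have hquarter : distSq u Q x / (2 * r) ^ 2 ≤ 1 / 4 := by
    rw [div_le_iff₀ (by positivity)]
    linarith
  calc (9 : ℝ) / 16 = (3 / 4) ^ 2 := by norm_num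
    _ ≤ _ := pow_le_pow_left₀ (by norm_num) (le_max_of_le_left (by linarith)) 2

lemma hasCompactSupport_cutoff (u : ℝ × ℝ → ℝ) (Q : ℝ × ℝ) (hr : 0 < r) :
    HasCompactSupport (cutoff u Q r) :=
  .intro (isCompact_closedBall Q (2 * r)) fun _ hx => cutoff_eq_zero hr <| not_lt.1 fun hlt =>
    hx (Metric.ball_subset_closedBall (distSq_lt_subset_ball (by positivity) hlt))

lemma hasDerivAt_cutoff_profile (r d : ℝ) :
    HasDerivAt (fun t : ℝ => max (1 - t / (2 * r) ^ 2) 0 ^ 2)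
      (-(max (1 - d / (2 * r) ^ 2) 0 / (2 * r ^ 2))) d :=
  ((hasDerivAt_posPart_sq _).comp d (((hasDerivAt_id d).div_const ((2 * r) ^ 2)).const_sub 1)
    ).congr_deriv (by simp only [id]; ring)

lemma fderiv_cutoff_apply (hu : ContDiff ℝ 1 u) (Q : ℝ × ℝ) (r : ℝ) (x e : ℝ × ℝ) :
    fderiv ℝ (cutoff u Q r) x e =
      -(max (1 - distSq u Q x / (2 * r) ^ 2) 0 / (2 * r ^ 2)) * fderiv ℝ (distSq u Q) x e :=
  fderiv_scalar_comp_apply (hasDerivAt_cutoff_profile r _)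
    ((contDiff_distSq hu Q).differentiable one_ne_zero x) e

lemma jacobian_cutoff (hu : ContDiff ℝ 1 u) (f : ℝ × ℝ → ℝ) (Q : ℝ × ℝ) (r : ℝ) (x : ℝ × ℝ) :
    jacobian (cutoff u Q r) f x =
      -(max (1 - distSq u Q x / (2 * r) ^ 2) 0 / (2 * r ^ 2)) * jacobian (distSq u Q) f x :=
  jacobian_scalar_comp_left (hasDerivAt_cutoff_profile r _)
    ((contDiff_distSq hu Q).differentiable one_ne_zero x)

end DistSq

lemma setIntegral_le_of_indicator_le {α : Type*} [MeasurableSpace α] {μ : Measure α}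
    {A B : Set α} {f g F : α → ℝ} (hA : MeasurableSet A) (hB : MeasurableSet B)
    (hf : IntegrableOn f A μ) (hg : IntegrableOn g B μ) (hF : Integrable F μ)
    (h : ∀ x, A.indicator f x ≤ B.indicator g x + F x) :
    ∫ x in A, f x ∂μ ≤ ∫ x in B, g x ∂μ + ∫ x, F x ∂μ := by
  rw [← integral_indicator hA, ← integral_indicator hB,
    ← integral_add (hg.integrable_indicator hB) hF]
  exact integral_mono (hf.integrable_indicator hA) ((hg.integrable_indicator hB).add hF) h

/-- In the applications `F` is the integrand of an identity obtained from a test function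
containing the cutoff. -/
lemma setIntegral_distSq_lt_le {u f g F : ℝ × ℝ → ℝ} {Q : ℝ × ℝ} {r : ℝ} (hr : 0 < r)
    (hu : Continuous u) (hf : Continuous f) (hg : Continuous g) (hf0 : ∀ x, 0 ≤ f x)
    (hFi : Integrable F) (hF : ∫ x, F x = 0) (hF0 : ∀ x, (2 * r) ^ 2 ≤ distSq u Q x → F x = 0)
    (h : ∀ x, distSq u Q x < (2 * r) ^ 2 → cutoff u Q r x * f x ≤ g x + F x) :
    ∫ x in {x | distSq u Q x < r ^ 2}, 9 / 16 * f x ≤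
      ∫ x in {x | distSq u Q x < (2 * r) ^ 2}, g x := by
  have hA := (isOpen_distSq_lt hu Q (r ^ 2)).measurableSet
  have hB := (isOpen_distSq_lt hu Q ((2 * r) ^ 2)).measurableSet
  refine (setIntegral_le_of_indicator_le hA hB
    (integrableOn_distSq_lt (hf.const_mul _) u Q hr.le)
    (integrableOn_distSq_lt hg u Q (by positivity)) hFi fun x => ?_).trans_eq (by rw [hF, add_zero])
  rcases lt_or_ge (distSq u Q x) ((2 * r) ^ 2) with hx | hx
  · rw [indicator_of_mem (s := {x | distSq u Q x < (2 * r) ^ 2}) hx]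
    refine (indicator_apply_le' (fun hxr => ?_) fun _ => ?_).trans (h x hx)
    · exact mul_le_mul_of_nonneg_right (le_cutoff hr hxr) (hf0 x)
    · exact mul_nonneg (cutoff_nonneg _ _ _ _) (hf0 x)
  · rw [indicator_of_notMem (s := {x | distSq u Q x < (2 * r) ^ 2}) hx.not_gt,
      indicator_of_notMem (s := {x | distSq u Q x < r ^ 2})
        (fun hlt : distSq u Q x < r ^ 2 => by nlinarith only [hr, hx, hlt]), hF0 x hx, add_zero]

/-! ### The area of extrinsic balls -/

section Area

variable {u φ : ℝ × ℝ → ℝ} {Q x : ℝ × ℝ} {r : ℝ}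

/-- The integrand of the weak form of the mean curvature equation for the graph of `u`, tested with
`φ`. -/
def weakMeanCurvature (u φ : ℝ × ℝ → ℝ) (x : ℝ × ℝ) : ℝ :=
  2 * meanCurvature u x * φ x + (tiltX u x * pdx φ x + tiltY u x * pdy φ x)

lemma weakMeanCurvature_eq (hu : ContDiff ℝ 2 u) (hφ : ContDiff ℝ 1 φ) (x : ℝ × ℝ) :
    weakMeanCurvature u φ x =
      pdx (fun z => tiltX u z * φ z) x + pdy (fun z => tiltY u z * φ z) x := by
  have hφx := hφ.differentiable one_ne_zero x
  rw [pdx_mul ((contDiff_tiltX hu).differentiable one_ne_zero x) hφx,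
    pdy_mul ((contDiff_tiltY hu).differentiable one_ne_zero x) hφx, weakMeanCurvature,
    meanCurvature]
  ring

lemma integrable_weakMeanCurvature (hu : ContDiff ℝ 2 u) (hφ : ContDiff ℝ 1 φ)
    (hφc : HasCompactSupport φ) : Integrable (weakMeanCurvature u φ) := by
  rw [funext (weakMeanCurvature_eq hu hφ)]
  exact ((continuous_pdx ((contDiff_tiltX hu).mul hφ)).add
    (continuous_pdy ((contDiff_tiltY hu).mul hφ))).integrable_of_hasCompactSupport
      ((hasCompactSupport_pdx hφc.mul_left).add (hasCompactSupport_pdy hφc.mul_left))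

lemma integral_weakMeanCurvature (hu : ContDiff ℝ 2 u) (hφ : ContDiff ℝ 1 φ)
    (hφc : HasCompactSupport φ) : ∫ x, weakMeanCurvature u φ x = 0 := by
  have hX := (contDiff_tiltX hu).mul hφ
  have hY := (contDiff_tiltY hu).mul hφ
  simp only [weakMeanCurvature_eq hu hφ]
  refine (integral_add ((continuous_pdx hX).integrable_of_hasCompactSupport
    (hasCompactSupport_pdx hφc.mul_left)) ((continuous_pdy hY).integrable_of_hasCompactSupport
    (hasCompactSupport_pdy hφc.mul_left))).trans ?_
  exact (congrArg₂ (· + ·) (integral_fderiv_apply_eq_zero volume hX hφc.mul_left (1, 0))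
    (integral_fderiv_apply_eq_zero volume hY hφc.mul_left (0, 1))).trans (add_zero 0)

/-- A bounded function of the height `u`, increasing at rate at least `1 / 2` while the height
differs from that of `Q` by at most `r`. -/
def truncHeight (u : ℝ × ℝ → ℝ) (Q : ℝ × ℝ) (r : ℝ) (x : ℝ × ℝ) : ℝ :=
  r * arctan ((u x - u Q) / r)

lemma abs_truncHeight_le (hr : 0 ≤ r) : |truncHeight u Q r x| ≤ 2 * r := by
  have harctan : |arctan ((u x - u Q) / r)| ≤ 2 :=
    abs_le.2 ⟨by linarith [neg_pi_div_two_lt_arctan ((u x - u Q) / r), pi_le_four],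
      by linarith [arctan_lt_pi_div_two ((u x - u Q) / r), pi_le_four]⟩
  rw [truncHeight, abs_mul, abs_of_nonneg hr, mul_comm]
  gcongr

lemma contDiff_truncHeight (hu : ContDiff ℝ 1 u) (Q : ℝ × ℝ) (r : ℝ) :
    ContDiff ℝ 1 (truncHeight u Q r) :=
  contDiff_const.mul (contDiff_arctan.comp ((hu.sub contDiff_const).div_const r))

lemma fderiv_truncHeight_apply (hu : DifferentiableAt ℝ u x) (hr : r ≠ 0) (e : ℝ × ℝ) :
    fderiv ℝ (truncHeight u Q r) x e =
      1 / (1 + ((u x - u Q) / r) ^ 2) * fderiv ℝ u x e := by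
  refine fderiv_scalar_comp_apply (c := fun t => r * arctan ((t - u Q) / r)) ?_ hu e
  have hlin : HasDerivAt (fun t => (t - u Q) / r) (1 / r) (u x) :=
    ((hasDerivAt_id _).sub_const (u Q)).div_const r
  refine (hlin.arctan.const_mul r).congr_deriv ?_
  field_simp

lemma abs_fderiv_cutoff_zero_le (hr : 0 < r) (hx : distSq 0 Q x < (2 * r) ^ 2) :
    |pdx (cutoff 0 Q r) x| ≤ 2 / r ∧ |pdy (cutoff 0 Q r) x| ≤ 2 / r := by
  have hball := distSq_lt_subset_ball (by positivity) hx
  rw [Metric.mem_ball, Prod.dist_eq, max_lt_iff, Real.dist_eq, Real.dist_eq] at hball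
  have hbound (d : ℝ) (hd : |d| ≤ 2 * r) :
      |-(max (1 - distSq 0 Q x / (2 * r) ^ 2) 0 / (2 * r ^ 2)) * (2 * d)| ≤ 2 / r := by
    rw [abs_mul, abs_neg, abs_mul, abs_two, abs_of_nonneg (by positivity)]
    calc _ ≤ 1 / (2 * r ^ 2) * (2 * (2 * r)) := by
          gcongr
          exact max_one_sub_distSq_le_one 0 Q r x
      _ = 2 / r := by
          field_simp
  have hzero : ContDiff ℝ 1 (0 : ℝ × ℝ → ℝ) := contDiff_const
  have hdiff := hzero.differentiable one_ne_zero x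
  constructor
  · rw [pdx, fderiv_cutoff_apply hzero, ← pdx, pdx_distSq hdiff]
    simpa using hbound _ hball.1.le
  · rw [pdy, fderiv_cutoff_apply hzero, ← pdy, pdy_distSq hdiff]
    simpa using hbound _ hball.2.le

lemma weakMeanCurvature_mul_cutoff_eq_zero (hφ : DifferentiableAt ℝ φ x) (hr : 0 < r)
    (hx : (2 * r) ^ 2 ≤ distSq 0 Q x) :
    weakMeanCurvature u (fun z => φ z * cutoff 0 Q r z) x = 0 := by
  have hzero : ContDiff ℝ 1 (0 : ℝ × ℝ → ℝ) := contDiff_const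
  have hχ := (contDiff_cutoff hzero Q r).differentiable one_ne_zero x
  have hfderiv (e : ℝ × ℝ) : fderiv ℝ (cutoff 0 Q r) x e = 0 := by
    rw [fderiv_cutoff_apply hzero, max_one_sub_distSq_eq_zero hr hx, zero_div, neg_zero, zero_mul]
  rw [weakMeanCurvature, pdx_mul hφ hχ, pdy_mul hφ hχ, pdx, pdy, hfderiv, hfderiv,
    cutoff_eq_zero hr hx]
  ring

lemma abs_mul_mul_le {a b c A B C : ℝ} (ha : |a| ≤ A) (hb : |b| ≤ B) (hc : |c| ≤ C) :
    |a * (b * c)| ≤ A * (B * C) := by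
  rw [abs_mul, abs_mul]
  have hA := (abs_nonneg a).trans ha
  have hB := (abs_nonneg b).trans hb
  gcongr

lemma cutoff_mul_Wgraph_le (hu : ContDiff ℝ 1 u) (hr : 0 < r)
    (hH : r * |meanCurvature u x| ≤ 2) (hx : distSq 0 Q x < (2 * r) ^ 2) :
    cutoff 0 Q r x * (1 / (1 + ((u x - u Q) / r) ^ 2) * Wgraph u x) ≤
      17 + weakMeanCurvature u (fun z => truncHeight u Q r z * cutoff 0 Q r z) x := by
  have hux := hu.differentiable one_ne_zero x
  have hT := (contDiff_truncHeight hu Q r).differentiable one_ne_zero x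
  have hzero : ContDiff ℝ 1 (0 : ℝ × ℝ → ℝ) := contDiff_const
  have hχ := (contDiff_cutoff hzero Q r).differentiable one_ne_zero x
  have hgrad := grad_mul_tilt u x
  obtain ⟨hχx, hχy⟩ := abs_fderiv_cutoff_zero_le hr hx
  have hcurv : |2 * meanCurvature u x * (truncHeight u Q r x * cutoff 0 Q r x)| ≤ 8 :=
    (abs_mul_mul_le (A := 4 / r) (by
      rw [abs_mul, abs_two, le_div_iff₀ hr]
      linarith) (abs_truncHeight_le hr.le)
      ((abs_of_nonneg (cutoff_nonneg _ _ _ _)).trans_le (cutoff_le_one 0 Q r x))).trans_eq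
        (by field_simp; norm_num)
  have hX : |tiltX u x * (truncHeight u Q r x * pdx (cutoff 0 Q r) x)| ≤ 4 :=
    (abs_mul_mul_le (abs_tiltX_le_one u x) (abs_truncHeight_le hr.le) hχx).trans_eq
      (by field_simp; norm_num)
  have hY : |tiltY u x * (truncHeight u Q r x * pdy (cutoff 0 Q r) x)| ≤ 4 :=
    (abs_mul_mul_le (abs_tiltY_le_one u x) (abs_truncHeight_le hr.le) hχy).trans_eq
      (by field_simp; norm_num)
  have hpdx : pdx (truncHeight u Q r) x = _ := fderiv_truncHeight_apply hux hr.ne' (1, 0)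
  have hpdy : pdy (truncHeight u Q r) x = _ := fderiv_truncHeight_apply hux hr.ne' (0, 1)
  rw [weakMeanCurvature, pdx_mul hT hχ, pdy_mul hT hχ, hpdx, hpdy, ← pdx, ← pdy]
  set τ := 1 / (1 + ((u x - u Q) / r) ^ 2)
  have hone : cutoff 0 Q r x * (τ * (1 / Wgraph u x)) ≤ 1 :=
    mul_le_one₀ (cutoff_le_one _ _ _ _) (by have := Wgraph_pos u x; positivity)
      (mul_le_one₀ (div_le_one_of_le₀ (le_add_of_nonneg_right (sq_nonneg _)) (by positivity))
        (by have := Wgraph_pos u x; positivity) (div_le_one_of_le₀ (one_le_Wgraph u x)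
          (Wgraph_pos u x).le))
  linear_combination hone + neg_le_of_abs_le hcurv + neg_le_of_abs_le hX + neg_le_of_abs_le hY -
    cutoff 0 Q r x * τ * hgrad

lemma volume_real_distSq_lt_le (u : ℝ × ℝ → ℝ) (Q : ℝ × ℝ) (hr : 0 ≤ r) :
    volume.real {x | distSq u Q x < r ^ 2} ≤ 4 * r ^ 2 := by
  have hball : volume.real (Metric.closedBall Q r) = 4 * r ^ 2 := by
    rw [← Prod.mk.eta (p := Q), ← closedBall_prod_same, measureReal_def, Measure.volume_eq_prod,
      Measure.prod_prod, Real.volume_closedBall, Real.volume_closedBall,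
      ← ENNReal.ofReal_mul (by positivity), ENNReal.toReal_ofReal (by positivity)]
    ring
  rw [← hball]
  exact measureReal_mono ((distSq_lt_subset_ball hr).trans Metric.ball_subset_closedBall)
    (isCompact_closedBall Q r).measure_lt_top.ne

lemma half_le_one_div_one_add_sq (hr : 0 < r) (hx : distSq u Q x < r ^ 2) :
    1 / 2 ≤ 1 / (1 + ((u x - u Q) / r) ^ 2) := by
  have hheight : (u x - u Q) ^ 2 ≤ r ^ 2 := by
    unfold distSq at hx
    linarith [sq_nonneg (x.1 - Q.1), sq_nonneg (x.2 - Q.2)]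
  have := (div_le_one (by positivity)).2 hheight
  rw [← div_pow] at this
  exact one_div_le_one_div_of_le (by positivity) (by linarith)

lemma distSq_zero_le (u : ℝ × ℝ → ℝ) (Q x : ℝ × ℝ) : distSq 0 Q x ≤ distSq u Q x := by
  simp only [distSq, Pi.zero_apply]
  linarith [sq_nonneg (u x - u Q)]

/-- The test function is the truncated height times a cutoff in the plane, so that the leading term
is a multiple of `|∇u|² / W`, which is almost `W`. -/
lemma setIntegral_Wgraph_distSq_lt_le (hu : ContDiff ℝ 2 u) (hr : 0 < r)
    (hH : ∀ x ∈ Metric.ball Q (2 * r), r * |meanCurvature u x| ≤ 2) :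
    ∫ x in {x | distSq u Q x < r ^ 2}, Wgraph u x ≤ 1000 * r ^ 2 := by
  have hu1 : ContDiff ℝ 1 u := hu.of_le one_le_two
  have hucont := hu.continuous
  have hzero : ContDiff ℝ 1 (0 : ℝ × ℝ → ℝ) := contDiff_const
  have hW := (contDiff_Wgraph hu).continuous
  have hT := contDiff_truncHeight hu1 Q r
  have hφ := hT.mul (contDiff_cutoff hzero Q r)
  have hφc : HasCompactSupport fun x => truncHeight u Q r x * cutoff 0 Q r x :=
    (hasCompactSupport_cutoff 0 Q hr).mul_left
  set f := fun x => 1 / (1 + ((u x - u Q) / r) ^ 2) * Wgraph u x with hf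
  have hfc : Continuous f := (continuous_const.div (by fun_prop) fun x => by positivity).mul hW
  have hf0 (x) : 0 ≤ f x := mul_nonneg (by positivity) (Wgraph_pos u x).le
  have htest : ∫ x in {x | distSq 0 Q x < r ^ 2}, 9 / 16 * f x ≤
      ∫ x in {x | distSq 0 Q x < (2 * r) ^ 2}, 17 := by
    exact setIntegral_distSq_lt_le hr hzero.continuous hfc continuous_const hf0
      (integrable_weakMeanCurvature hu hφ hφc) (integral_weakMeanCurvature hu hφ hφc)
      (fun x hx => weakMeanCurvature_mul_cutoff_eq_zero (hT.differentiable one_ne_zero x) hr hx)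
      fun x hx => cutoff_mul_Wgraph_le hu1 hr (hH x (distSq_lt_subset_ball (by positivity) hx)) hx
  rw [integral_const_mul, setIntegral_const, smul_eq_mul] at htest
  have hvol := volume_real_distSq_lt_le 0 Q (by positivity : 0 ≤ 2 * r)
  calc ∫ x in {x | distSq u Q x < r ^ 2}, Wgraph u x
      ≤ ∫ x in {x | distSq u Q x < r ^ 2}, 2 * f x :=
        setIntegral_mono_on (integrableOn_distSq_lt hW u Q hr.le)
          (integrableOn_distSq_lt (hfc.const_mul 2) u Q hr.le)
          (isOpen_distSq_lt hucont Q _).measurableSet fun x hx => by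
            nlinarith only [half_le_one_div_one_add_sq hr hx, Wgraph_pos u x, hf]
    _ ≤ 2 * ∫ x in {x | distSq 0 Q x < r ^ 2}, f x := by
        rw [integral_const_mul]
        gcongr
        · exact Eventually.of_forall hf0
        · exact integrableOn_distSq_lt hfc 0 Q hr.le
        · exact distSq_zero_le u Q _
    _ ≤ 1000 * r ^ 2 := by linarith [sq_nonneg r]

end Area

/-! ### The total curvature of extrinsic balls -/

section Energy

variable {u f η : ℝ × ℝ → ℝ} {Q x : ℝ × ℝ} {r : ℝ}

/-- The factor `W / (W + 1)`, by which `∇u / W` has to be multiplied to get `∇u / (W + 1)`. -/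
def tiltFactor (u : ℝ × ℝ → ℝ) (x : ℝ × ℝ) : ℝ := Wgraph u x / (Wgraph u x + 1)

/-- Gauss curvature times the area element of the graph of `u`, multiplied by `η` inside the
derivatives of its primitives. -/
def curvatureForm (u η : ℝ × ℝ → ℝ) (x : ℝ × ℝ) : ℝ :=
  jacobian (fun z => η z * (tiltX u z * tiltFactor u z)) (tiltY u) x +
    jacobian (tiltX u) (fun z => η z * (tiltY u z * tiltFactor u z)) x

lemma contDiff_tiltFactor (hu : ContDiff ℝ 2 u) : ContDiff ℝ 1 (tiltFactor u) :=
  (contDiff_Wgraph hu).div ((contDiff_Wgraph hu).add contDiff_const)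
    fun x => (add_pos (Wgraph_pos u x) one_pos).ne'

lemma abs_tiltFactor_le_one (u : ℝ × ℝ → ℝ) (x : ℝ × ℝ) : |tiltFactor u x| ≤ 1 := by
  have hW := Wgraph_pos u x
  rw [tiltFactor, abs_of_pos (by positivity)]
  exact div_le_one_of_le₀ (by linarith) (by positivity)

lemma fderiv_tiltFactor_apply (hu : ContDiff ℝ 2 u) (x e : ℝ × ℝ) :
    fderiv ℝ (tiltFactor u) x e = tiltFactor u x ^ 2 *
      (pdx u x * fderiv ℝ (tiltX u) x e + pdy u x * fderiv ℝ (tiltY u) x e) := by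
  have hW := Wgraph_pos u x
  have hquot : HasDerivAt (fun t : ℝ => t / (t + 1)) (1 / (Wgraph u x + 1) ^ 2) (Wgraph u x) :=
    ((hasDerivAt_id (Wgraph u x)).div ((hasDerivAt_id (Wgraph u x)).add_const 1)
      (by simp only [id]; positivity)).congr_deriv (by simp)
  rw [show fderiv ℝ (tiltFactor u) x e = _ from fderiv_scalar_comp_apply hquot
    ((contDiff_Wgraph hu).differentiable one_ne_zero x) e, fderiv_Wgraph_apply hu, tiltFactor]
  field_simp

lemma jacobian_tiltFactor (hu : ContDiff ℝ 2 u) (f : ℝ × ℝ → ℝ) (x : ℝ × ℝ) :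
    jacobian (tiltFactor u) f x = tiltFactor u x ^ 2 *
      (pdx u x * jacobian (tiltX u) f x + pdy u x * jacobian (tiltY u) f x) := by
  simp only [jacobian, pdx, pdy, fderiv_tiltFactor_apply hu]
  ring

lemma tiltFactor_mul_two_add (u : ℝ × ℝ → ℝ) (x : ℝ × ℝ) :
    tiltFactor u x * (2 + tiltFactor u x * (pdx u x * tiltX u x + pdy u x * tiltY u x)) =
      Wgraph u x := by
  have hW := Wgraph_pos u x
  rw [grad_mul_tilt, tiltFactor]
  field_simp
  ring

/-- Gauss curvature times the area element is exact, with primitives bounded by `1`. -/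
lemma jacobian_tilt_mul_tiltFactor (hu : ContDiff ℝ 2 u) (x : ℝ × ℝ) :
    jacobian (fun z => tiltX u z * tiltFactor u z) (tiltY u) x +
      jacobian (tiltX u) (fun z => tiltY u z * tiltFactor u z) x =
        Wgraph u x * gaussCurvature u x := by
  have hX := (contDiff_tiltX hu).differentiable one_ne_zero x
  have hY := (contDiff_tiltY hu).differentiable one_ne_zero x
  have hk := (contDiff_tiltFactor hu).differentiable one_ne_zero x
  rw [jacobian_mul_left hX hk, jacobian_mul_right hY hk, jacobian_swap (tiltX u) (tiltFactor u),
    jacobian_tiltFactor hu, jacobian_tiltFactor hu, gaussCurvature,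
    jacobian_swap (tiltY u) (tiltX u), ← tiltFactor_mul_two_add]
  simp only [jacobian]
  ring

lemma curvatureForm_eq (hu : ContDiff ℝ 2 u) (hη : ContDiff ℝ 1 η) (x : ℝ × ℝ) :
    curvatureForm u η x = η x * (Wgraph u x * gaussCurvature u x) +
      (tiltX u x * tiltFactor u x * jacobian η (tiltY u) x -
        tiltY u x * tiltFactor u x * jacobian η (tiltX u) x) := by
  have hηx := hη.differentiable one_ne_zero x
  have hk := contDiff_tiltFactor hu
  have hX := ((contDiff_tiltX hu).mul hk).differentiable one_ne_zero x
  have hY := ((contDiff_tiltY hu).mul hk).differentiable one_ne_zero x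
  rw [curvatureForm, jacobian_mul_left hηx hX, jacobian_mul_right hηx hY,
    ← jacobian_tilt_mul_tiltFactor hu, jacobian_swap (tiltX u) η]
  ring

lemma integrable_curvatureForm (hu : ContDiff ℝ 2 u) (hη : ContDiff ℝ 1 η)
    (hηc : HasCompactSupport η) : Integrable (curvatureForm u η) := by
  have hX := contDiff_tiltX hu
  have hY := contDiff_tiltY hu
  have hk := contDiff_tiltFactor hu
  have hright : HasCompactSupport
      (jacobian (tiltX u) fun z => η z * (tiltY u z * tiltFactor u z)) := by
    rw [funext (jacobian_swap (tiltX u) _)]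
    exact (hasCompactSupport_jacobian_left hηc.mul_right).neg
  exact ((continuous_jacobian (hη.mul (hX.mul hk)) hY).integrable_of_hasCompactSupport
    (hasCompactSupport_jacobian_left hηc.mul_right)).add
    ((continuous_jacobian hX (hη.mul (hY.mul hk))).integrable_of_hasCompactSupport hright)

lemma integral_curvatureForm (hu : ContDiff ℝ 2 u) (huc : HasCompactSupport u)
    (hη : ContDiff ℝ 1 η) (hηc : HasCompactSupport η) : ∫ x, curvatureForm u η x = 0 := by
  have hX := contDiff_tiltX hu
  have hY := contDiff_tiltY hu
  have hk := contDiff_tiltFactor hu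
  have hright := hη.mul (hY.mul hk)
  have hrightc : HasCompactSupport fun z => η z * (tiltY u z * tiltFactor u z) := hηc.mul_right
  have hleft := hη.mul (hX.mul hk)
  have hleftc : HasCompactSupport fun z => η z * (tiltX u z * tiltFactor u z) := hηc.mul_right
  refine (integral_add ((continuous_jacobian hleft hY).integrable_of_hasCompactSupport
    (hasCompactSupport_jacobian_left hleftc))
    ((continuous_jacobian hX hright).integrable_of_hasCompactSupport
    (hasCompactSupport_jacobian_left (hasCompactSupport_tiltX huc)))).trans ?_
  exact (congrArg₂ (· + ·)
    (integral_jacobian_eq_zero hleft hleftc hY (hasCompactSupport_tiltY huc))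
    (integral_jacobian_eq_zero hX (hasCompactSupport_tiltX huc) hright hrightc)).trans (add_zero 0)

lemma abs_jacobian_cutoff_le (hu : ContDiff ℝ 2 u) (hr : 0 < r)
    (hx : distSq u Q x < (2 * r) ^ 2)
    (hf : surfaceGradSq u f x ≤ Wgraph u x ^ 2 * sffSq u x) :
    |jacobian (cutoff u Q r) f x| ≤
      Wgraph u x * (cutoff u Q r x * sffSq u x / 8 + 8 / r ^ 2) := by
  have hu1 : ContDiff ℝ 1 u := hu.of_le one_le_two
  have hS := sffSq_nonneg hu x
  have hJ := abs_jacobian_distSq_le (f := f) (hu1.differentiable one_ne_zero x) (by positivity)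
    hx.le
  have hsqrt : √(surfaceGradSq u f x) ≤ Wgraph u x * √(sffSq u x) := by
    refine (Real.sqrt_le_sqrt hf).trans_eq ?_
    rw [Real.sqrt_mul (sq_nonneg _), Real.sqrt_sq (Wgraph_pos u x).le]
  rw [jacobian_cutoff hu1, cutoff]
  set m := max (1 - distSq u Q x / (2 * r) ^ 2) 0
  have : 0 ≤ m := le_max_right _ _
  rw [abs_mul, abs_neg, abs_of_nonneg (by positivity)]
  calc m / (2 * r ^ 2) * |jacobian (distSq u Q) f x|
      ≤ m / (2 * r ^ 2) * (2 * (2 * r) * (Wgraph u x * √(sffSq u x))) := by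
        gcongr
        exact hJ.trans (by gcongr)
    _ = Wgraph u x * (2 * (m * √(sffSq u x)) * (1 / r)) := by field_simp
    _ ≤ Wgraph u x * (m ^ 2 * sffSq u x / 8 + 8 / r ^ 2) := by
        have hyoung := sq_nonneg (m * √(sffSq u x) - 8 * (1 / r))
        have hsq := Real.sq_sqrt hS
        refine mul_le_mul_of_nonneg_left ?_ (Wgraph_pos u x).le
        linear_combination hyoung / 8 + m ^ 2 / 8 * hsq

lemma cutoff_mul_sffSq_le (hu : ContDiff ℝ 2 u) (hr : 0 < r)
    (hH : r * |meanCurvature u x| ≤ 1) (hx : distSq u Q x < (2 * r) ^ 2) :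
    cutoff u Q r x * (Wgraph u x * sffSq u x / 4) ≤
      18 / r ^ 2 * Wgraph u x + -curvatureForm u (cutoff u Q r) x := by
  have hW := Wgraph_pos u x
  have hJX := abs_jacobian_cutoff_le hu hr hx (surfaceGradSq_tiltX_le hu x)
  have hJY := abs_jacobian_cutoff_le hu hr hx (surfaceGradSq_tiltY_le hu x)
  have hXJ := abs_mul_mul_le (abs_tiltX_le_one u x) (abs_tiltFactor_le_one u x) hJY
  have hYJ := abs_mul_mul_le (abs_tiltY_le_one u x) (abs_tiltFactor_le_one u x) hJX
  have hmean : meanCurvature u x ^ 2 ≤ 1 / r ^ 2 := by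
    rw [le_div_iff₀ (by positivity), ← mul_pow, sq_le_one_iff_abs_le_one, abs_mul, abs_of_pos hr,
      mul_comm]
    exact hH
  have hηmean : cutoff u Q r x * meanCurvature u x ^ 2 ≤ 1 / r ^ 2 :=
    (mul_le_of_le_one_left (sq_nonneg _) (cutoff_le_one u Q r x)).trans hmean
  rw [curvatureForm_eq hu (contDiff_cutoff (hu.of_le one_le_two) Q r)]
  linear_combination le_of_abs_le hXJ + neg_le_of_abs_le hYJ + 2 * Wgraph u x * hηmean +
    cutoff u Q r x * Wgraph u x / 2 * sffSq_eq u x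

lemma curvatureForm_cutoff_eq_zero (hu : ContDiff ℝ 2 u) (hr : 0 < r)
    (hx : (2 * r) ^ 2 ≤ distSq u Q x) : curvatureForm u (cutoff u Q r) x = 0 := by
  have hu1 : ContDiff ℝ 1 u := hu.of_le one_le_two
  rw [curvatureForm_eq hu (contDiff_cutoff hu1 Q r), jacobian_cutoff hu1, jacobian_cutoff hu1,
    cutoff_eq_zero hr hx, max_one_sub_distSq_eq_zero hr hx]
  ring

/-- Since `|A|² = 4 H² - 2 K`, it is enough to bound the integral of the Gauss curvature `K` against
a cutoff function; `K` times the area element is exact with bounded primitives, and the terms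
containing derivatives of the cutoff function are absorbed by Young's inequality and the area
bound. -/
lemma setIntegral_sffSq_distSq_lt_le (hu : ContDiff ℝ 2 u) (huc : HasCompactSupport u)
    (hr : 0 < r) (hH : ∀ x ∈ Metric.ball Q (4 * r), r * |meanCurvature u x| ≤ 1) :
    ∫ x in {x | distSq u Q x < r ^ 2}, Wgraph u x * sffSq u x ≤ 1000000 := by
  have hW := (contDiff_Wgraph hu).continuous
  have hS := continuous_sffSq hu
  have hη := contDiff_cutoff (hu.of_le one_le_two) Q r
  have hηc := hasCompactSupport_cutoff u Q hr
  have harea : ∫ x in {x | distSq u Q x < (2 * r) ^ 2}, Wgraph u x ≤ 1000 * (2 * r) ^ 2 := by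
    refine setIntegral_Wgraph_distSq_lt_le hu (by positivity) fun x hx => ?_
    linarith [hH x (Metric.ball_subset_ball (by linarith) hx)]
  have htest := setIntegral_distSq_lt_le (f := fun x => Wgraph u x * sffSq u x / 4) hr
    hu.continuous (by fun_prop) (hW.const_mul (18 / r ^ 2))
    (fun x => by have := sffSq_nonneg hu x; have := Wgraph_pos u x; positivity)
    (integrable_curvatureForm hu hη hηc).neg
    (by rw [integral_neg', integral_curvatureForm hu huc hη hηc, neg_zero])
    (fun x hx => neg_eq_zero.2 (curvatureForm_cutoff_eq_zero hu hr hx))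
    fun x hx => cutoff_mul_sffSq_le hu hr
      (hH x (Metric.ball_subset_ball (by linarith) (distSq_lt_subset_ball (by positivity) hx))) hx
  simp only [mul_div_assoc', integral_const_mul, integral_div] at htest
  have hbound : 18 / r ^ 2 * ∫ x in {x | distSq u Q x < (2 * r) ^ 2}, Wgraph u x ≤
      18 / r ^ 2 * (1000 * (2 * r) ^ 2) := by gcongr
  have hconst : 18 / r ^ 2 * (1000 * (2 * r) ^ 2) = 72000 := by
    field_simp
    norm_num
  linarith

end Energy

/-! ### A level curve with small oscillation of the normal -/

section Level

variable {u f g F : ℝ × ℝ → ℝ} {Q : ℝ × ℝ} {r : ℝ}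

lemma det_fderiv_prod_fderiv (f g : ℝ × ℝ → ℝ) (x : ℝ × ℝ) :
    ((fderiv ℝ f x).prod (fderiv ℝ g x)).det = jacobian f g x := by
  rw [ContinuousLinearMap.det, ← LinearMap.det_toMatrix (Module.Basis.finTwoProd ℝ),
    Matrix.det_fin_two]
  simp [LinearMap.toMatrix_apply, jacobian, pdx, pdy]

/-- By Fubini and the area formula for `x ↦ (f x, g x)`, only few level sets of `f` have a large
image under `g`. -/
lemma mul_volume_image_level_le (hf : ContDiff ℝ 1 f) (hg : ContDiff ℝ 1 g) {K : Set (ℝ × ℝ)}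
    (hK : IsCompact K) (ε : ENNReal) :
    ε * volume {s : ℝ | ε ≤ volume (g '' (K ∩ f ⁻¹' {s}))} ≤
      ∫⁻ x in K, ENNReal.ofReal |jacobian f g x| := by
  have hm : MeasurableSet ((fun x => (f x, g x)) '' K) :=
    (hK.image (hf.continuous.prodMk hg.continuous)).measurableSet
  have hslice (s : ℝ) :
      g '' (K ∩ f ⁻¹' {s}) = Prod.mk s ⁻¹' ((fun x => (f x, g x)) '' K) := by
    ext y
    simp [and_assoc]
  simp only [hslice]
  calc ε * volume {s : ℝ | ε ≤ volume (Prod.mk s ⁻¹' ((fun x => (f x, g x)) '' K))}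
      ≤ ∫⁻ s, volume (Prod.mk s ⁻¹' ((fun x => (f x, g x)) '' K)) :=
        mul_meas_ge_le_lintegral (measurable_measure_prodMk_left hm) ε
    _ = volume ((fun x => (f x, g x)) '' K) := by
        rw [Measure.volume_eq_prod, Measure.prod_apply hm]
    _ ≤ ∫⁻ x in K, ENNReal.ofReal |((fderiv ℝ f x).prod (fderiv ℝ g x)).det| :=
        addHaar_image_le_lintegral_abs_det_fderiv volume hK.measurableSet fun x _ =>
          ((hf.differentiable one_ne_zero x).hasFDerivAt.prodMk
            (hg.differentiable one_ne_zero x).hasFDerivAt).hasFDerivWithinAt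
    _ = ∫⁻ x in K, ENNReal.ofReal |jacobian f g x| := by simp_rw [det_fderiv_prod_fderiv]

lemma exists_volume_image_level_lt (hF : ContDiff ℝ 1 F) (hf : ContDiff ℝ 1 f)
    (hg : ContDiff ℝ 1 g) {K : Set (ℝ × ℝ)} (hK : IsCompact K) {ε : ENNReal} {a b : ℝ}
    (h : (∫⁻ x in K, ENNReal.ofReal |jacobian F f x|) +
      ∫⁻ x in K, ENNReal.ofReal |jacobian F g x| < ε * ENNReal.ofReal (b - a)) :
    ∃ s ∈ Icc a b, volume (f '' (K ∩ F ⁻¹' {s})) < ε ∧ volume (g '' (K ∩ F ⁻¹' {s})) < ε := by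
  by_contra! hcon
  have hcover : Icc a b ⊆ {s | ε ≤ volume (f '' (K ∩ F ⁻¹' {s}))} ∪
      {s | ε ≤ volume (g '' (K ∩ F ⁻¹' {s}))} :=
    fun s hs => (le_or_gt ε (volume (f '' (K ∩ F ⁻¹' {s})))).imp_right (hcon s hs)
  refine h.not_ge ?_
  calc ε * ENNReal.ofReal (b - a) = ε * volume (Icc a b) := by rw [Real.volume_Icc]
    _ ≤ ε * (volume {s | ε ≤ volume (f '' (K ∩ F ⁻¹' {s}))} +
          volume {s | ε ≤ volume (g '' (K ∩ F ⁻¹' {s}))}) := by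
        gcongr
        exact (measure_mono hcover).trans (measure_union_le _ _)
    _ ≤ _ := by
        rw [mul_add]
        exact add_le_add (mul_volume_image_level_le hF hf hK ε)
          (mul_volume_image_level_le hF hg hK ε)

lemma exists_setIntegral_preimage_Ico_le {α : Type*} [MeasurableSpace α] {μ : Measure α}
    {F g : α → ℝ} (hF : Measurable F) {a : ℕ → ℝ} (ha : Antitone a)
    (hg : IntegrableOn g (F ⁻¹' Iio (a 0)) μ) (hg0 : ∀ x, 0 ≤ g x) {n : ℕ} (hn : n ≠ 0) :
    ∃ k < n, ∫ x in F ⁻¹' Ico (a (k + 1)) (a k), g x ∂μ ≤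
      (∫ x in F ⁻¹' Iio (a 0), g x ∂μ) / n := by
  have hsub (k : ℕ) : F ⁻¹' Ico (a (k + 1)) (a k) ⊆ F ⁻¹' Iio (a 0) :=
    preimage_mono fun _ hs => hs.2.trans_le (ha k.zero_le)
  have hdisj : Pairwise (Function.onFun Disjoint fun k => F ⁻¹' Ico (a (k + 1)) (a k)) :=
    fun j k hjk => (ha.pairwise_disjoint_on_Ico_succ hjk).preimage F
  have hsum : ∑ k ∈ Finset.range n, ∫ x in F ⁻¹' Ico (a (k + 1)) (a k), g x ∂μ ≤
      ∑ _k ∈ Finset.range n, (∫ x in F ⁻¹' Iio (a 0), g x ∂μ) / n := by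
    rw [← integral_biUnion_finset _ (fun k _ => hF measurableSet_Ico) (hdisj.set_pairwise _)
      fun k _ => hg.mono_set (hsub k), Finset.sum_const, Finset.card_range, nsmul_eq_mul,
      mul_div_cancel₀ _ (Nat.cast_ne_zero.2 hn)]
    exact setIntegral_mono_set hg (Eventually.of_forall hg0)
      (iUnion₂_subset fun k _ => hsub k).eventuallyLE
  obtain ⟨k, hk, hle⟩ := Finset.exists_le_of_sum_le (Finset.nonempty_range_iff.2 hn) hsum
  exact ⟨k, Finset.mem_range.1 hk, hle⟩

lemma isCompact_distSq_preimage_Icc (hu : Continuous u) (Q : ℝ × ℝ) (a b : ℝ) :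
    IsCompact (distSq u Q ⁻¹' Icc a b) := by
  have hd : Continuous (distSq u Q) := by
    unfold distSq
    fun_prop
  refine (isCompact_closedBall Q (|b| + 1)).of_isClosed_subset (isClosed_Icc.preimage hd) ?_
  refine fun x hx => Metric.ball_subset_closedBall (distSq_lt_subset_ball (u := u)
    (by positivity) ?_)
  exact hx.2.trans_lt (by nlinarith only [le_abs_self b, abs_nonneg b])

/-- The parameter `t` balances the area of `K` against its total curvature. -/
lemma lintegral_abs_jacobian_distSq_le (hu : ContDiff ℝ 2 u) (hr : 0 < r) {t : ℝ} (ht : 0 < t)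
    (hf : ∀ x, surfaceGradSq u f x ≤ Wgraph u x ^ 2 * sffSq u x) {K : Set (ℝ × ℝ)}
    (hK : MeasurableSet K) (hKr : K ⊆ {x | distSq u Q x < (2 * r) ^ 2}) :
    ∫⁻ x in K, ENNReal.ofReal |jacobian (distSq u Q) f x| ≤
      ENNReal.ofReal (2 / t * (∫ x in K, Wgraph u x) +
        2 * r ^ 2 * t * ∫ x in K, Wgraph u x * sffSq u x) := by
  have hW := (contDiff_Wgraph hu).continuous
  have hS := continuous_sffSq hu
  have hWpos := Wgraph_pos u
  have hS0 := sffSq_nonneg hu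
  have hInt {h : ℝ × ℝ → ℝ} (hh : Continuous h) : IntegrableOn h K :=
    (integrableOn_distSq_lt hh u Q (by positivity)).mono_set hKr
  have hbound (x) (hx : x ∈ K) : |jacobian (distSq u Q) f x| ≤
      2 / t * Wgraph u x + 2 * r ^ 2 * t * (Wgraph u x * sffSq u x) := by
    have hJ := abs_jacobian_distSq_le (f := f) (hu.differentiable two_ne_zero x) (by positivity)
      (hKr hx).le
    have hsqrt := Real.sqrt_le_sqrt (hf x)
    rw [Real.sqrt_mul (sq_nonneg _), Real.sqrt_sq (hWpos x).le] at hsqrt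
    calc |jacobian (distSq u Q) f x| ≤ 2 * (2 * r) * (Wgraph u x * √(sffSq u x)) :=
          hJ.trans (by gcongr)
      _ ≤ 2 * (2 * r) * (Wgraph u x * √(sffSq u x)) +
          2 / t * (Wgraph u x * (1 - r * t * √(sffSq u x)) ^ 2) :=
          le_add_of_nonneg_right (by have := hWpos x; positivity)
      _ = 2 / t * Wgraph u x + 2 * r ^ 2 * t * (Wgraph u x * √(sffSq u x) ^ 2) := by
          field_simp
          ring
      _ = _ := by rw [Real.sq_sqrt (hS0 x)]
  have hWi : IntegrableOn (fun x => 2 / t * Wgraph u x) K := hInt (by fun_prop)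
  have hSi : IntegrableOn (fun x => 2 * r ^ 2 * t * (Wgraph u x * sffSq u x)) K :=
    hInt (by fun_prop)
  have hsum : IntegrableOn (fun x => 2 / t * Wgraph u x +
      2 * r ^ 2 * t * (Wgraph u x * sffSq u x)) K := hWi.add hSi
  rw [← integral_const_mul, ← integral_const_mul, ← integral_add hWi hSi,
    ofReal_integral_eq_lintegral_ofReal hsum]
  · exact setLIntegral_mono' hK fun x hx => ENNReal.ofReal_le_ofReal (hbound x hx)
  · exact Eventually.of_forall fun x => by
      have := hWpos x
      have := hS0 x
      simp only [Pi.zero_apply]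
      positivity

lemma lintegral_abs_jacobian_distSq_le_of_small_curvature (hu : ContDiff ℝ 2 u) (hr : 0 < r)
    {ε : ℝ} (hε : 0 < ε) (hf : ∀ x, surfaceGradSq u f x ≤ Wgraph u x ^ 2 * sffSq u x)
    (harea : ∫ x in {x | distSq u Q x < (2 * r) ^ 2}, Wgraph u x ≤ 4000 * r ^ 2)
    (hcurv : ∫ x in distSq u Q ⁻¹' Ico (r ^ 2) ((2 * r) ^ 2), Wgraph u x * sffSq u x ≤
      1000000 / (3000000 / ε) ^ 2) {K : Set (ℝ × ℝ)} (hK : MeasurableSet K)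
    (hKann : K ⊆ distSq u Q ⁻¹' Ico (r ^ 2) ((2 * r) ^ 2)) :
    ∫⁻ x in K, ENNReal.ofReal |jacobian (distSq u Q) f x| ≤
      ENNReal.ofReal (9 / 10 * r ^ 2 * ε) := by
  have hW := (contDiff_Wgraph hu).continuous
  have hS := continuous_sffSq hu
  have hann : distSq u Q ⁻¹' Ico (r ^ 2) ((2 * r) ^ 2) ⊆ {x | distSq u Q x < (2 * r) ^ 2} :=
    fun x hx => hx.2
  have hKW := (setIntegral_mono_set (integrableOn_distSq_lt hW u Q (by positivity))
    (Eventually.of_forall fun x => (Wgraph_pos u x).le) (hKann.trans hann).eventuallyLE).trans harea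
  have hKS : ∫ x in K, Wgraph u x * sffSq u x ≤ _ := (setIntegral_mono_set
    ((integrableOn_distSq_lt (hW.mul hS) u Q (by positivity)).mono_set hann)
    (Eventually.of_forall fun x => mul_nonneg (Wgraph_pos u x).le (sffSq_nonneg hu x))
    hKann.eventuallyLE).trans hcurv
  refine (lintegral_abs_jacobian_distSq_le hu hr (t := 3000000 / ε) (by positivity) hf
    hK (hKann.trans hann)).trans (ENNReal.ofReal_le_ofReal ?_)
  calc _ ≤ 2 / (3000000 / ε) * (4000 * r ^ 2) +
        2 * r ^ 2 * (3000000 / ε) * (1000000 / (3000000 / ε) ^ 2) := by gcongr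
    _ ≤ 9 / 10 * r ^ 2 * ε := by
        field_simp
        norm_num

lemma exists_level_of_small_curvature (hu : ContDiff ℝ 2 u) (hr : 0 < r) {ε : ℝ} (hε : 0 < ε)
    (harea : ∫ x in {x | distSq u Q x < (2 * r) ^ 2}, Wgraph u x ≤ 4000 * r ^ 2)
    (hcurv : ∫ x in distSq u Q ⁻¹' Ico (r ^ 2) ((2 * r) ^ 2), Wgraph u x * sffSq u x ≤
      1000000 / (3000000 / ε) ^ 2) :
    ∃ s ∈ Ico (r ^ 2) ((2 * r) ^ 2),
      volume (tiltX u '' (distSq u Q ⁻¹' {s})) < ENNReal.ofReal ε ∧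
      volume (tiltY u '' (distSq u Q ⁻¹' {s})) < ENNReal.ofReal ε := by
  have hIcc : Icc (r ^ 2) (3 * r ^ 2) ⊆ Ico (r ^ 2) ((2 * r) ^ 2) :=
    Icc_subset_Ico_right (by nlinarith only [hr])
  set K := distSq u Q ⁻¹' Icc (r ^ 2) (3 * r ^ 2)
  have hK : IsCompact K := isCompact_distSq_preimage_Icc hu.continuous Q _ _
  have hJ {f : ℝ × ℝ → ℝ} (hf : ∀ x, surfaceGradSq u f x ≤ Wgraph u x ^ 2 * sffSq u x) :=
    lintegral_abs_jacobian_distSq_le_of_small_curvature hu hr hε hf harea hcurv hK.measurableSet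
      (preimage_mono hIcc)
  have hlength : ENNReal.ofReal (9 / 10 * r ^ 2 * ε) + ENNReal.ofReal (9 / 10 * r ^ 2 * ε) <
      ENNReal.ofReal ε * ENNReal.ofReal (3 * r ^ 2 - r ^ 2) := by
    have hpos : 0 < r ^ 2 * ε := by positivity
    rw [← ENNReal.ofReal_add (by positivity) (by positivity), ← ENNReal.ofReal_mul hε.le,
      ENNReal.ofReal_lt_ofReal_iff (by linarith only [hpos])]
    linarith only [hpos]
  obtain ⟨s, hs, hX, hY⟩ := exists_volume_image_level_lt
    (contDiff_distSq (hu.of_le one_le_two) Q) (contDiff_tiltX hu) (contDiff_tiltY hu) hK <|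
    (add_le_add (hJ (surfaceGradSq_tiltX_le hu)) (hJ (surfaceGradSq_tiltY_le hu))).trans_lt hlength
  have hlevel : K ∩ distSq u Q ⁻¹' {s} = distSq u Q ⁻¹' {s} :=
    inter_eq_right.2 (preimage_mono (singleton_subset_iff.2 hs))
  rw [hlevel] at hX hY
  exact ⟨s, hIcc hs, hX, hY⟩

/-- The logarithmic length-area argument: among `n` dyadic annuli one carries little curvature, and
most level curves of the distance in that annulus have a small image under both `tiltX u` and
`tiltY u`. -/
lemma exists_level_volume_image_tilt_lt {ε : ℝ} (hε : 0 < ε) :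
    ∃ n : ℕ, ∀ (u : ℝ × ℝ → ℝ) (Q : ℝ × ℝ) (R : ℝ), ContDiff ℝ 2 u → HasCompactSupport u →
      0 < R → (∀ x ∈ Metric.ball Q (4 * R), R * |meanCurvature u x| ≤ 1) →
      ∃ s ∈ Ico ((R / 2 ^ n) ^ 2) (R ^ 2),
        volume (tiltX u '' (distSq u Q ⁻¹' {s})) < ENNReal.ofReal ε ∧
        volume (tiltY u '' (distSq u Q ⁻¹' {s})) < ENNReal.ofReal ε := by
  refine ⟨⌈(3000000 / ε) ^ 2⌉₊, fun u Q R hu huc hR hH => ?_⟩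
  have hn : ⌈(3000000 / ε) ^ 2⌉₊ ≠ 0 := (Nat.ceil_pos.2 (by positivity)).ne'
  set n := ⌈(3000000 / ε) ^ 2⌉₊
  have hW := (contDiff_Wgraph hu).continuous
  have hS := continuous_sffSq hu
  have hanti : Antitone fun k : ℕ => (R / 2 ^ k) ^ 2 := fun j k hjk => by
    have h2 : (2 : ℝ) ^ j ≤ 2 ^ k := pow_le_pow_right₀ one_le_two hjk
    dsimp only
    gcongr
  have hzero : distSq u Q ⁻¹' Iio ((R / 2 ^ 0) ^ 2) = {x | distSq u Q x < R ^ 2} := by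
    rw [pow_zero, div_one]
    rfl
  obtain ⟨k, hk, hcurv⟩ := exists_setIntegral_preimage_Ico_le (μ := volume)
    (g := fun x => Wgraph u x * sffSq u x)
    (contDiff_distSq (hu.of_le one_le_two) Q).continuous.measurable hanti
    (hzero ▸ integrableOn_distSq_lt (hW.mul hS) u Q hR.le)
    (fun x => mul_nonneg (Wgraph_pos u x).le (sffSq_nonneg hu x)) hn
  set r := R / 2 ^ (k + 1) with hr
  have hr2 : R / 2 ^ k = 2 * r := by
    rw [hr, pow_succ]
    field_simp
  have hrR : 2 * r ≤ R := hr2 ▸ div_le_self hR.le (one_le_pow₀ one_le_two)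
  have hr0 : 0 < r := by positivity
  rw [hzero, hr2] at hcurv
  have harea : ∫ x in {x | distSq u Q x < (2 * r) ^ 2}, Wgraph u x ≤ 1000 * (2 * r) ^ 2 :=
    setIntegral_Wgraph_distSq_lt_le hu (by positivity) fun x hx =>
      (mul_le_mul_of_nonneg_right hrR (abs_nonneg _)).trans
        ((hH x (Metric.ball_subset_ball (by linarith) hx)).trans one_le_two)
  obtain ⟨s, hs, hXY⟩ := exists_level_of_small_curvature hu hr0 hε (harea.trans_eq (by ring)) <|
    hcurv.trans <| div_le_div₀ (by norm_num) (setIntegral_sffSq_distSq_lt_le hu huc hR hH)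
      (by positivity) (Nat.le_ceil _)
  exact ⟨s, Ico_subset_Ico (hanti hk) (pow_le_pow_left₀ (by positivity) hrR 2) hs, hXY⟩

end Level

/-! ### Maximum principle for directional derivatives -/

section IndicatorPosPart

lemma indicator_posPart_sq_eventuallyEq_zero {X : Type*} [TopologicalSpace X] {D : Set X}
    {g : X → ℝ} {x : X} (hg : Continuous g) (hfr : ∀ z ∈ frontier D, g z < 0) (hx : x ∉ D) :
    D.indicator (fun y => max (g y) 0 ^ 2) =ᶠ[nhds x] fun _ => 0 := by
  by_cases hxc : x ∈ closure D
  · have hxg : g x < 0 := hfr x ⟨hxc, fun hxi => hx (interior_subset hxi)⟩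
    filter_upwards [(isOpen_lt hg continuous_const).mem_nhds hxg] with y (hy : g y < 0)
    refine indicator_apply_eq_zero.2 fun _ => ?_
    rw [max_eq_right hy.le, zero_pow two_ne_zero]
  · filter_upwards [isClosed_closure.isOpen_compl.mem_nhds hxc] with y hy
    exact indicator_of_notMem (fun hyD => hy (subset_closure hyD)) _

variable {E : Type*} [NormedAddCommGroup E] [NormedSpace ℝ E] {D : Set E} {g : E → ℝ}

lemma contDiff_indicator_posPart_sq (hD : IsOpen D) (hg : ContDiff ℝ 1 g)
    (hfr : ∀ z ∈ frontier D, g z < 0) :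
    ContDiff ℝ 1 (D.indicator fun y => max (g y) 0 ^ 2) := by
  refine contDiff_iff_contDiffAt.2 fun x => ?_
  by_cases hx : x ∈ D
  · exact (contDiff_posPart_sq.comp hg).contDiffAt.congr_of_eventuallyEq
      (eqOn_indicator.eventuallyEq_of_mem (hD.mem_nhds hx))
  · exact contDiffAt_const.congr_of_eventuallyEq
      (indicator_posPart_sq_eventuallyEq_zero hg.continuous hfr hx)

lemma fderiv_indicator_posPart_sq (hD : IsOpen D) (hg : ContDiff ℝ 1 g)
    (hfr : ∀ z ∈ frontier D, g z < 0) (x v : E) :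
    fderiv ℝ (D.indicator fun y => max (g y) 0 ^ 2) x v =
      D.indicator (fun y => 2 * max (g y) 0 * fderiv ℝ g y v) x := by
  by_cases hx : x ∈ D
  · rw [(eqOn_indicator.eventuallyEq_of_mem (hD.mem_nhds hx)).fderiv_eq, indicator_of_mem hx,
      fderiv_scalar_comp_apply (hasDerivAt_posPart_sq _) (hg.differentiable one_ne_zero x)]
  · rw [(indicator_posPart_sq_eventuallyEq_zero hg.continuous hfr hx).fderiv_eq,
      indicator_of_notMem hx, fderiv_fun_const]
    rfl

end IndicatorPosPart

section MaximumPrinciple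

variable {u : ℝ × ℝ → ℝ} {D : Set (ℝ × ℝ)} {H : ℝ}

/-- The weak form of the equation satisfied by a directional derivative of `u`. It contains only
first derivatives of the tilt, so that `u` need not be `C³`. -/
lemma integral_fderiv_tilt_mul_eq_zero (hu : ContDiff ℝ 2 u) (huc : HasCompactSupport u)
    {φ : ℝ × ℝ → ℝ} (hφ : ContDiff ℝ 1 φ) (hφc : HasCompactSupport φ)
    (hH : ∀ x, fderiv ℝ φ x ≠ 0 → meanCurvature u x = H) (e : ℝ × ℝ) :
    ∫ x, (fderiv ℝ (tiltX u) x e * pdx φ x + fderiv ℝ (tiltY u) x e * pdy φ x) = 0 := by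
  have hX := contDiff_tiltX hu
  have hY := contDiff_tiltY hu
  have hInt {h : ℝ × ℝ → ℝ} (hh : ContDiff ℝ 1 h) (v w : ℝ × ℝ) :
      Integrable fun x => fderiv ℝ h x v * fderiv ℝ φ x w :=
    (((hh.continuous_fderiv one_ne_zero).clm_apply continuous_const).mul
      ((hφ.continuous_fderiv one_ne_zero).clm_apply
        continuous_const)).integrable_of_hasCompactSupport (hφc.fderiv_apply (𝕜 := ℝ) w).mul_left
  calc ∫ x, (fderiv ℝ (tiltX u) x e * pdx φ x + fderiv ℝ (tiltY u) x e * pdy φ x)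
      = ∫ x, (pdx (tiltX u) x * fderiv ℝ φ x e + pdy (tiltY u) x * fderiv ℝ φ x e) := by
        simp only [pdx, pdy]
        rw [integral_add (hInt hX _ _) (hInt hY _ _), integral_add (hInt hX _ _) (hInt hY _ _),
          integral_fderiv_mul_fderiv_comm volume hX (hasCompactSupport_tiltX huc) hφ hφc e (1, 0),
          integral_fderiv_mul_fderiv_comm volume hY (hasCompactSupport_tiltY huc) hφ hφc e (0, 1)]
    _ = ∫ x, 2 * H * fderiv ℝ φ x e := by
        refine integral_congr_ae (Eventually.of_forall fun x => ?_)
        by_cases hx : fderiv ℝ φ x = 0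
        · simp [hx]
        · simp only [← hH x hx, meanCurvature]
          ring
    _ = 0 := by
        rw [integral_const_mul, integral_fderiv_apply_eq_zero volume hφ hφc e, mul_zero]

lemma fderiv_tilt_mul_fderiv_fderiv (hu : ContDiff ℝ 2 u) (x e : ℝ × ℝ) :
    fderiv ℝ (tiltX u) x e * pdx (fun z => fderiv ℝ u z e) x +
        fderiv ℝ (tiltY u) x e * pdy (fun z => fderiv ℝ u z e) x =
      Wgraph u x * (fderiv ℝ (tiltX u) x e ^ 2 + fderiv ℝ (tiltY u) x e ^ 2 +
        (pdx u x * fderiv ℝ (tiltX u) x e + pdy u x * fderiv ℝ (tiltY u) x e) ^ 2) := by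
  have hx : pdx (fun z => fderiv ℝ u z e) x = fderiv ℝ (pdx u) x e :=
    fderiv_fderiv_apply_comm hu x e _
  have hy : pdy (fun z => fderiv ℝ u z e) x = fderiv ℝ (pdy u) x e :=
    fderiv_fderiv_apply_comm hu x e _
  rw [hx, hy, fderiv_pdx_apply hu, fderiv_pdy_apply hu]
  ring

lemma fderiv_fderiv_eq_zero_of_tilt (hu : ContDiff ℝ 2 u) {x e : ℝ × ℝ}
    (h : fderiv ℝ (tiltX u) x e * pdx (fun z => fderiv ℝ u z e) x +
      fderiv ℝ (tiltY u) x e * pdy (fun z => fderiv ℝ u z e) x = 0) (v : ℝ × ℝ) :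
    fderiv ℝ (fun z => fderiv ℝ u z e) x v = 0 := by
  rw [fderiv_tilt_mul_fderiv_fderiv hu, mul_eq_zero, or_iff_right (Wgraph_pos u x).ne'] at h
  have hX : fderiv ℝ (tiltX u) x e = 0 := by
    nlinarith only [h, sq_nonneg (fderiv ℝ (tiltX u) x e), sq_nonneg (fderiv ℝ (tiltY u) x e),
      sq_nonneg (pdx u x * fderiv ℝ (tiltX u) x e + pdy u x * fderiv ℝ (tiltY u) x e)]
  have hY : fderiv ℝ (tiltY u) x e = 0 := by
    nlinarith only [h, sq_nonneg (fderiv ℝ (tiltX u) x e), sq_nonneg (fderiv ℝ (tiltY u) x e),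
      sq_nonneg (pdx u x * fderiv ℝ (tiltX u) x e + pdy u x * fderiv ℝ (tiltY u) x e)]
  have hx : pdx (fun z => fderiv ℝ u z e) x = 0 :=
    (fderiv_fderiv_apply_comm hu x e _).trans <|
      (fderiv_pdx_apply hu x e).trans (by simp only [hX, hY, mul_zero, add_zero])
  have hy : pdy (fun z => fderiv ℝ u z e) x = 0 :=
    (fderiv_fderiv_apply_comm hu x e _).trans <|
      (fderiv_pdy_apply hu x e).trans (by simp only [hX, hY, mul_zero, add_zero])
  rw [fderiv_apply_eq_pdx_pdy, hx, hy, mul_zero, mul_zero, add_zero]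

/-- The test function for the maximum principle: the square of the positive part of `∂ₑu - K`, cut
off outside `D`. -/
def excess (u : ℝ × ℝ → ℝ) (D : Set (ℝ × ℝ)) (e : ℝ × ℝ) (K : ℝ) : ℝ × ℝ → ℝ :=
  D.indicator fun z => max (fderiv ℝ u z e - K) 0 ^ 2

variable {e : ℝ × ℝ} {K : ℝ}

lemma contDiff_fderiv_apply_sub_const (hu : ContDiff ℝ 2 u) (e : ℝ × ℝ) (K : ℝ) :
    ContDiff ℝ 1 fun z => fderiv ℝ u z e - K :=
  ((hu.fderiv_right (m := 1) (by norm_num)).clm_apply contDiff_const).sub contDiff_const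

lemma contDiff_excess (hu : ContDiff ℝ 2 u) (hD : IsOpen D)
    (hfr : ∀ z ∈ frontier D, fderiv ℝ u z e < K) : ContDiff ℝ 1 (excess u D e K) :=
  contDiff_indicator_posPart_sq hD (contDiff_fderiv_apply_sub_const hu e K)
    fun z hz => sub_neg.2 (hfr z hz)

lemma hasCompactSupport_excess (hD : Bornology.IsBounded D) :
    HasCompactSupport (excess u D e K) :=
  HasCompactSupport.intro hD.isCompact_closure fun _ hz =>
    indicator_of_notMem (fun hzD => hz (subset_closure hzD)) _

lemma fderiv_excess_apply (hu : ContDiff ℝ 2 u) (hD : IsOpen D)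
    (hfr : ∀ z ∈ frontier D, fderiv ℝ u z e < K) (z v : ℝ × ℝ) :
    fderiv ℝ (excess u D e K) z v = D.indicator
      (fun y => 2 * max (fderiv ℝ u y e - K) 0 * fderiv ℝ (fun w => fderiv ℝ u w e) y v) z := by
  rw [excess, fderiv_indicator_posPart_sq hD (contDiff_fderiv_apply_sub_const hu e K)
    fun z hz => sub_neg.2 (hfr z hz)]
  simp only [fderiv_sub_const]

lemma fderiv_tilt_mul_fderiv_excess (hu : ContDiff ℝ 2 u) (hD : IsOpen D)
    (hfr : ∀ z ∈ frontier D, fderiv ℝ u z e < K) (x : ℝ × ℝ) :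
    fderiv ℝ (tiltX u) x e * pdx (excess u D e K) x +
        fderiv ℝ (tiltY u) x e * pdy (excess u D e K) x =
      D.indicator (fun y => 2 * max (fderiv ℝ u y e - K) 0 *
        (fderiv ℝ (tiltX u) y e * pdx (fun z => fderiv ℝ u z e) y +
          fderiv ℝ (tiltY u) y e * pdy (fun z => fderiv ℝ u z e) y)) x := by
  simp only [pdx, pdy, fderiv_excess_apply hu hD hfr]
  by_cases hx : x ∈ D
  · simp only [indicator_of_mem hx]
    ring
  · simp only [indicator_of_notMem hx, mul_zero, add_zero]

lemma fderiv_excess_eq_zero (hu : ContDiff ℝ 2 u) (huc : HasCompactSupport u) (hD : IsOpen D)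
    (hDb : Bornology.IsBounded D) (hH : ∀ x ∈ D, meanCurvature u x = H)
    (hfr : ∀ z ∈ frontier D, fderiv ℝ u z e < K) (x : ℝ × ℝ) :
    fderiv ℝ (excess u D e K) x = 0 := by
  set φ := excess u D e K
  set I : ℝ × ℝ → ℝ := fun z =>
    fderiv ℝ (tiltX u) z e * pdx φ z + fderiv ℝ (tiltY u) z e * pdy φ z
  have hφ : ContDiff ℝ 1 φ := contDiff_excess hu hD hfr
  have hφc : HasCompactSupport φ := hasCompactSupport_excess hDb
  have hI := fderiv_tilt_mul_fderiv_excess hu hD hfr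
  have hI_nonneg : 0 ≤ I := fun z => (indicator_nonneg (fun y _ => by
    rw [fderiv_tilt_mul_fderiv_fderiv hu]
    have := Wgraph_pos u y
    have := le_max_right (fderiv ℝ u y e - K) 0
    positivity) z).trans_eq (hI z).symm
  have hI_integral : ∫ z, I z = 0 := integral_fderiv_tilt_mul_eq_zero hu huc hφ hφc
    (fun z hz => hH z <| by_contra fun hzD => hz <| ContinuousLinearMap.ext fun v =>
      (fderiv_excess_apply hu hD hfr z v).trans (indicator_of_notMem hzD _)) e
  have hI_cont : Continuous I :=
    (((contDiff_tiltX hu).continuous_fderiv one_ne_zero).clm_apply continuous_const).mul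
      (continuous_pdx hφ) |>.add <|
    (((contDiff_tiltY hu).continuous_fderiv one_ne_zero).clm_apply continuous_const).mul
      (continuous_pdy hφ)
  have hI_supp : HasCompactSupport I :=
    (hasCompactSupport_pdx hφc).mul_left.add (hasCompactSupport_pdy hφc).mul_left
  have hI_zero : I = 0 := (hI_cont.ae_eq_iff_eq volume continuous_zero).1 <|
    (integral_eq_zero_iff_of_nonneg hI_nonneg
      (hI_cont.integrable_of_hasCompactSupport hI_supp)).1 hI_integral
  refine ContinuousLinearMap.ext fun v => (fderiv_excess_apply hu hD hfr x v).trans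
    (indicator_apply_eq_zero.2 fun hx => ?_)
  have hIx := (hI x).symm.trans (congrFun hI_zero x)
  rw [indicator_of_mem hx, Pi.zero_apply, mul_eq_zero] at hIx
  exact mul_eq_zero.2 (hIx.imp_right fun h => fderiv_fderiv_eq_zero_of_tilt hu h v)

theorem fderiv_apply_le_of_frontier_le (hu : ContDiff ℝ 2 u) (huc : HasCompactSupport u)
    (hD : IsOpen D) (hDb : Bornology.IsBounded D) (hH : ∀ x ∈ D, meanCurvature u x = H)
    (hfr : ∀ z ∈ frontier D, fderiv ℝ u z e ≤ K) {x : ℝ × ℝ} (hx : x ∈ D) :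
    fderiv ℝ u x e ≤ K := by
  refine le_of_forall_gt_imp_ge_of_dense fun K' hK' => ?_
  have hlt (z) (hz : z ∈ frontier D) : fderiv ℝ u z e < K' := (hfr z hz).trans_lt hK'
  have hconst (y) : excess u D e K' x = excess u D e K' y :=
    is_const_of_fderiv_eq_zero ((contDiff_excess hu hD hlt).differentiable one_ne_zero)
      (fderiv_excess_eq_zero hu huc hD hDb hH hlt) x y
  obtain ⟨y, hy⟩ := (ne_univ_iff_exists_notMem D).1 fun hDuniv =>
    NormedSpace.unbounded_univ ℝ (ℝ × ℝ) (hDuniv ▸ hDb)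
  have hzero : max (fderiv ℝ u x e - K') 0 ^ 2 = 0 :=
    (indicator_of_mem hx _).symm.trans ((hconst y).trans (indicator_of_notMem hy _))
  exact sub_nonpos.1 (max_eq_right_iff.1 (pow_eq_zero_iff two_ne_zero |>.1 hzero))

end MaximumPrinciple

/-! ### The interior gradient estimate -/

lemma abs_sub_lt_of_volume_image_lt {X : Type*} [TopologicalSpace X] {g : X → ℝ} {S T : Set X}
    (hS : IsPreconnected S) (hg : ContinuousOn g S) (hST : S ⊆ T) {ε : ℝ}
    (hv : volume (g '' T) < ENNReal.ofReal ε) {x y : X} (hx : x ∈ S) (hy : y ∈ S) :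
    |g x - g y| < ε := by
  have hsub : uIcc (g x) (g y) ⊆ g '' T := ((hS.image g hg).ordConnected.uIcc_subset
    (mem_image_of_mem g hx) (mem_image_of_mem g hy)).trans (image_mono hST)
  have hlt := (measure_mono hsub).trans_lt hv
  rw [Real.volume_interval, abs_sub_comm] at hlt
  exact (ENNReal.ofReal_lt_ofReal_iff'.1 hlt).1

/-- The point `z` is a nearest point of the complement of `D`, so that `D` contains a ball around
`x` with `z` on its boundary, to which the mean value inequality applies. -/
lemma exists_mem_frontier_norm_image_sub_le {E : Type*} [NormedAddCommGroup E] [NormedSpace ℝ E]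
    [ProperSpace E] {f : E → ℝ} (hf : Differentiable ℝ f) {D : Set E} (hD : IsOpen D) {x : E}
    (hx : x ∈ D) {L r : ℝ} (hL : ∀ y ∈ D, ‖fderiv ℝ f y‖ ≤ L) (hr : ¬ Metric.ball x r ⊆ D) :
    ∃ z ∈ frontier D, dist z x < r ∧ ‖f z - f x‖ ≤ L * dist z x := by
  obtain ⟨w, hwr, hwD⟩ := not_subset.1 hr
  obtain ⟨z, hzD, hz⟩ := hD.isClosed_compl.exists_infDist_eq_dist ⟨w, hwD⟩ x
  have hball : Metric.ball x (dist x z) ⊆ D := hz ▸ Metric.ball_infDist_compl_subset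
  have hne : dist x z ≠ 0 := dist_ne_zero.2 fun h => hzD (h ▸ hx)
  have hzc : z ∈ closure (Metric.ball x (dist x z)) := by
    rw [closure_ball x hne]
    exact Metric.mem_closedBall'.2 le_rfl
  refine ⟨z, hD.frontier_eq ▸ ⟨closure_mono hball hzc, hzD⟩, ?_, ?_⟩
  · rw [dist_comm, ← hz]
    exact (Metric.infDist_le_dist_of_mem hwD).trans_lt (Metric.mem_ball'.1 hwr)
  · have hmvt (y) (hy : y ∈ Metric.ball x (dist x z)) : ‖f y - f x‖ ≤ L * dist y x := by
      rw [dist_eq_norm]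
      exact (convex_ball x _).norm_image_sub_le_of_norm_fderiv_le (fun a _ => hf a)
        (fun a ha => hL a (hball ha)) (Metric.mem_ball_self (dist_nonneg.lt_of_ne' hne)) hy
    have hclosed : IsClosed {y | ‖f y - f x‖ ≤ L * dist y x} :=
      isClosed_le ((hf.continuous.sub continuous_const).norm) (by fun_prop)
    exact closure_minimal hmvt hclosed hzc

section GradientEstimate

variable {u : ℝ × ℝ → ℝ} {Q : ℝ × ℝ} {D : Set (ℝ × ℝ)} {H K M : ℝ}

lemma fderiv_apply_sq_le (u : ℝ × ℝ → ℝ) (x e : ℝ × ℝ) :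
    fderiv ℝ u x e ^ 2 ≤ (e.1 ^ 2 + e.2 ^ 2) * (Wgraph u x ^ 2 - 1) := by
  rw [fderiv_apply_eq_pdx_pdy, Wgraph_sq]
  linarith only [sq_nonneg (e.1 * pdy u x - e.2 * pdx u x)]

lemma norm_fderiv_le_two_mul_Wgraph (u : ℝ × ℝ → ℝ) (x : ℝ × ℝ) :
    ‖fderiv ℝ u x‖ ≤ 2 * Wgraph u x := by
  have hW := Wgraph_pos u x
  refine ContinuousLinearMap.opNorm_le_bound _ (by positivity) fun e => ?_
  have h₁ : e.1 ^ 2 ≤ ‖e‖ ^ 2 := sq_le_sq.2 ((norm_fst_le e).trans (le_abs_self _))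
  have h₂ : e.2 ^ 2 ≤ ‖e‖ ^ 2 := sq_le_sq.2 ((norm_snd_le e).trans (le_abs_self _))
  refine abs_le_of_sq_le_sq ?_ (by positivity)
  calc fderiv ℝ u x e ^ 2 ≤ (e.1 ^ 2 + e.2 ^ 2) * (Wgraph u x ^ 2 - 1) := fderiv_apply_sq_le u x e
    _ ≤ (e.1 ^ 2 + e.2 ^ 2) * Wgraph u x ^ 2 := by gcongr; exact sub_le_self _ zero_le_one
    _ ≤ (4 * ‖e‖ ^ 2) * Wgraph u x ^ 2 := by gcongr; linarith only [h₁, h₂, sq_nonneg ‖e‖]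
    _ = (2 * Wgraph u x * ‖e‖) ^ 2 := by ring

/-- The direction `e` is `∇u x`. -/
theorem Wgraph_le_of_frontier_le (hu : ContDiff ℝ 2 u) (huc : HasCompactSupport u)
    (hD : IsOpen D) (hDb : Bornology.IsBounded D) (hH : ∀ x ∈ D, meanCurvature u x = H)
    (hfr : ∀ z ∈ frontier D, Wgraph u z ≤ K) {x : ℝ × ℝ} (hx : x ∈ D) : Wgraph u x ≤ K := by
  obtain ⟨z₀, hz₀⟩ : (frontier D).Nonempty := nonempty_frontier_iff.2
    ⟨⟨x, hx⟩, fun h => NormedSpace.unbounded_univ ℝ (ℝ × ℝ) (h ▸ hDb)⟩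
  have hK : 1 ≤ K := (one_le_Wgraph u z₀).trans (hfr z₀ hz₀)
  have hK2 : 0 ≤ K ^ 2 - 1 := sub_nonneg.2 (one_le_pow₀ hK)
  set e : ℝ × ℝ := (pdx u x, pdy u x) with he
  set s := e.1 ^ 2 + e.2 ^ 2 with hs
  have hs0 : 0 ≤ s := by positivity
  have hfre (z) (hz : z ∈ frontier D) : fderiv ℝ u z e ≤ √(s * (K ^ 2 - 1)) := by
    refine Real.le_sqrt_of_sq_le ((fderiv_apply_sq_le u z e).trans ?_)
    have hW := Wgraph_pos u z
    gcongr
    exact hfr z hz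
  have hle : s ≤ √(s * (K ^ 2 - 1)) := by
    refine le_of_eq_of_le ?_ (fderiv_apply_le_of_frontier_le hu huc hD hDb hH hfre hx)
    rw [fderiv_apply_eq_pdx_pdy, hs, he]
    ring
  have hsq : s * s ≤ s * (K ^ 2 - 1) := by
    rw [← sq]
    exact (Real.le_sqrt hs0 (by positivity)).1 hle
  have hsK : s ≤ K ^ 2 - 1 := by
    rcases hs0.eq_or_lt with h | h
    · rwa [← h]
    · exact le_of_mul_le_mul_left hsq h
  refine le_of_sq_le_sq ?_ (zero_le_one.trans hK)
  rw [Wgraph_sq]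
  linarith only [hsK, hs]

/-- Otherwise the derivative of `u` in one fixed direction, opposite to the tilt at a boundary
point, is at most `-2 * Wgraph u Q` on the boundary, hence also at `Q`. -/
lemma exists_mem_frontier_Wgraph_lt (hu : ContDiff ℝ 2 u) (huc : HasCompactSupport u)
    (hD : IsOpen D) (hDb : Bornology.IsBounded D) (hH : ∀ x ∈ D, meanCurvature u x = H)
    (hQ : Q ∈ D)
    (hX : ∀ z ∈ frontier D, ∀ w ∈ frontier D, |tiltX u z - tiltX u w| ≤ 1 / 8)
    (hY : ∀ z ∈ frontier D, ∀ w ∈ frontier D, |tiltY u z - tiltY u w| ≤ 1 / 8) :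
    ∃ z ∈ frontier D, Wgraph u z < 4 * Wgraph u Q := by
  by_contra! hsteep
  obtain ⟨w, hw⟩ : (frontier D).Nonempty := nonempty_frontier_iff.2
    ⟨⟨Q, hQ⟩, fun h => NormedSpace.unbounded_univ ℝ (ℝ × ℝ) (h ▸ hDb)⟩
  have hWQ := one_le_Wgraph u Q
  have htilt (z) (hz : z ∈ frontier D) : 15 / 16 ≤ tiltX u z ^ 2 + tiltY u z ^ 2 := by
    have hW : 4 ≤ Wgraph u z := by linarith only [hWQ, hsteep z hz]
    have hWsq : 4 ^ 2 ≤ Wgraph u z ^ 2 := pow_le_pow_left₀ zero_le_four hW 2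
    have hmul := mul_le_mul_of_nonneg_right hWsq
      (show 0 ≤ 1 - tiltX u z ^ 2 - tiltY u z ^ 2 by
        linarith only [tiltX_sq_add_tiltY_sq_le_one u z])
    linarith only [hmul, Wgraph_sq_mul_one_sub_tilt_sq u z]
  set e : ℝ × ℝ := (-tiltX u w, -tiltY u w)
  have hfr (z) (hz : z ∈ frontier D) : fderiv ℝ u z e ≤ -(2 * Wgraph u Q) := by
    have hW := Wgraph_pos u z
    have hdot : 1 / 2 ≤ tiltX u z * tiltX u w + tiltY u z * tiltY u w := by
      have hXsq := sq_le_sq' (abs_le.1 (hX z hz w hw)).1 (abs_le.1 (hX z hz w hw)).2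
      have hYsq := sq_le_sq' (abs_le.1 (hY z hz w hw)).1 (abs_le.1 (hY z hz w hw)).2
      linarith only [hXsq, hYsq, htilt z hz, htilt w hw]
    calc fderiv ℝ u z e
        = -(Wgraph u z * (tiltX u z * tiltX u w + tiltY u z * tiltY u w)) := by
          rw [fderiv_apply_eq_pdx_pdy, ← tiltX_mul_Wgraph, ← tiltY_mul_Wgraph]
          ring
      _ ≤ -(4 * Wgraph u Q * (1 / 2)) := by
          gcongr
          exact hsteep z hz
      _ = -(2 * Wgraph u Q) := by ring
  have hQe := fderiv_apply_le_of_frontier_le hu huc hD hDb hH hfr hQ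
  have hcs : fderiv ℝ u Q e ^ 2 ≤ 1 * (Wgraph u Q ^ 2 - 1) :=
    (fderiv_apply_sq_le u Q e).trans <| mul_le_mul_of_nonneg_right
      (by simpa only [e, neg_sq] using tiltX_sq_add_tiltY_sq_le_one u w)
      (sub_nonneg.2 (one_le_pow₀ hWQ))
  nlinarith only [hQe, hcs, hWQ]

lemma sq_le_sq_add_two_mul_abs_sub {a b : ℝ} (ha : |a| ≤ 1) (hb : |b| ≤ 1) :
    a ^ 2 ≤ b ^ 2 + 2 * |a - b| := by
  have habs : |a + b| ≤ 2 := (abs_add_le a b).trans (by linarith only [ha, hb])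
  calc a ^ 2 = b ^ 2 + (a + b) * (a - b) := by ring
    _ ≤ b ^ 2 + |a + b| * |a - b| := by
        rw [← abs_mul]
        gcongr
        exact le_abs_self _
    _ ≤ b ^ 2 + 2 * |a - b| := by gcongr

lemma Wgraph_le_of_abs_tilt_sub_le {z w : ℝ × ℝ} (hK : Wgraph u w ≤ K)
    (hX : |tiltX u z - tiltX u w| ≤ 1 / (8 * K ^ 2))
    (hY : |tiltY u z - tiltY u w| ≤ 1 / (8 * K ^ 2)) : Wgraph u z ≤ 2 * K := by
  have hWw := Wgraph_pos u w
  have hWz := Wgraph_pos u z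
  have hK0 : 0 < K := hWw.trans_le hK
  have hXsq := sq_le_sq_add_two_mul_abs_sub (abs_tiltX_le_one u z) (abs_tiltX_le_one u w)
  have hYsq := sq_le_sq_add_two_mul_abs_sub (abs_tiltY_le_one u z) (abs_tiltY_le_one u w)
  have hε : 1 / (8 * K ^ 2) = 1 / K ^ 2 / 8 := by field_simp
  rw [hε] at hX hY
  have hw : 1 / K ^ 2 ≤ 1 - tiltX u w ^ 2 - tiltY u w ^ 2 := by
    have heq : 1 - tiltX u w ^ 2 - tiltY u w ^ 2 = 1 / Wgraph u w ^ 2 :=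
      eq_div_of_mul_eq (by positivity)
        ((mul_comm _ _).trans (Wgraph_sq_mul_one_sub_tilt_sq u w))
    rw [heq]
    gcongr
  have hz : 1 / (2 * K ^ 2) ≤ 1 - tiltX u z ^ 2 - tiltY u z ^ 2 := by
    have hhalf : 1 / (2 * K ^ 2) = 1 / K ^ 2 / 2 := by field_simp
    linarith only [hhalf, hw, hX, hY, hXsq, hYsq]
  have hle : Wgraph u z ^ 2 * (1 / (2 * K ^ 2)) ≤ 1 :=
    (mul_le_mul_of_nonneg_left hz (sq_nonneg _)).trans_eq (Wgraph_sq_mul_one_sub_tilt_sq u z)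
  rw [mul_one_div, div_le_one (by positivity)] at hle
  exact le_of_sq_le_sq (hle.trans (by nlinarith only [sq_nonneg K])) (by positivity)

lemma Wgraph_le_of_small_oscillation (hu : ContDiff ℝ 2 u) (huc : HasCompactSupport u)
    (hD : IsOpen D) (hDb : Bornology.IsBounded D) (hH : ∀ x ∈ D, meanCurvature u x = H)
    (hQ : Q ∈ D) (hM : Wgraph u Q ≤ M)
    (hX : ∀ z ∈ frontier D, ∀ w ∈ frontier D, |tiltX u z - tiltX u w| ≤ 1 / (8 * (4 * M) ^ 2))
    (hY : ∀ z ∈ frontier D, ∀ w ∈ frontier D, |tiltY u z - tiltY u w| ≤ 1 / (8 * (4 * M) ^ 2))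
    {x : ℝ × ℝ} (hx : x ∈ D) : Wgraph u x ≤ 2 * (4 * M) := by
  have hM1 : 1 ≤ M := (one_le_Wgraph u Q).trans hM
  have hε : 1 / (8 * (4 * M) ^ 2) ≤ 1 / 8 := by
    gcongr
    nlinarith only [hM1]
  obtain ⟨w, hw, hWw⟩ := exists_mem_frontier_Wgraph_lt hu huc hD hDb hH hQ
    (fun z hz w hw => (hX z hz w hw).trans hε) (fun z hz w hw => (hY z hz w hw).trans hε)
  exact Wgraph_le_of_frontier_le hu huc hD hDb hH
    (fun z hz => Wgraph_le_of_abs_tilt_sub_le (hWw.le.trans (by gcongr)) (hX z hz w hw)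
      (hY z hz w hw)) hx

lemma ball_subset_of_Wgraph_le (hu : Differentiable ℝ u) (hD : IsOpen D) (hQ : Q ∈ D)
    {C r s : ℝ} (hC : ∀ x ∈ D, Wgraph u x ≤ C) (hfr : ∀ z ∈ frontier D, s ≤ distSq u Q z)
    (hrs : 6 * C ^ 2 * r ^ 2 ≤ s) : Metric.ball Q r ⊆ D := by
  by_contra hsub
  have hC1 : 1 ≤ C := (one_le_Wgraph u Q).trans (hC Q hQ)
  obtain ⟨z, hz, hzr, hzu⟩ := exists_mem_frontier_norm_image_sub_le hu hD hQ
    (fun x hx => (norm_fderiv_le_two_mul_Wgraph u x).trans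
      (mul_le_mul_of_nonneg_left (hC x hx) zero_le_two)) hsub
  have hd : 0 ≤ dist z Q := dist_nonneg
  have h₁ : (z.1 - Q.1) ^ 2 ≤ dist z Q ^ 2 :=
    sq_le_sq.2 ((norm_fst_le (z - Q)).trans_eq (by rw [← dist_eq_norm, abs_of_nonneg hd]))
  have h₂ : (z.2 - Q.2) ^ 2 ≤ dist z Q ^ 2 :=
    sq_le_sq.2 ((norm_snd_le (z - Q)).trans_eq (by rw [← dist_eq_norm, abs_of_nonneg hd]))
  have h₃ : (u z - u Q) ^ 2 ≤ (2 * C * dist z Q) ^ 2 := sq_le_sq.2 (hzu.trans (le_abs_self _))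
  refine (hfr z hz).not_gt (lt_of_lt_of_le ?_ hrs)
  calc distSq u Q z ≤ dist z Q ^ 2 + dist z Q ^ 2 + (2 * C * dist z Q) ^ 2 :=
        add_le_add (add_le_add h₁ h₂) h₃
    _ ≤ 6 * C ^ 2 * dist z Q ^ 2 := by
        nlinarith only [mul_nonneg (sub_nonneg.2 (one_le_pow₀ (n := 2) hC1)) (sq_nonneg (dist z Q))]
    _ < 6 * C ^ 2 * r ^ 2 := by gcongr

/-- Compact support costs no generality, since the equation is only required near `Q`. -/
theorem exists_Wgraph_le_on_ball {R : ℝ} (hR : 0 < R) (M : ℝ) :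
    ∃ r > 0, ∃ C, ∀ (u : ℝ × ℝ → ℝ) (Q : ℝ × ℝ) (H : ℝ), ContDiff ℝ 2 u → HasCompactSupport u →
      R * |H| ≤ 1 → (∀ x ∈ Metric.ball Q (4 * R), meanCurvature u x = H) →
      Wgraph u Q ≤ M → ∀ x ∈ Metric.ball Q r, Wgraph u x ≤ C := by
  set N : ℝ := max M 1
  have hN : 0 < N := one_pos.trans_le (le_max_right _ _)
  obtain ⟨n, hn⟩ := exists_level_volume_image_tilt_lt (ε := 1 / (8 * (4 * N) ^ 2)) (by positivity)
  refine ⟨R / 2 ^ n / (20 * N), by positivity, 2 * (4 * N), fun u Q H hu huc hHR hH hQM => ?_⟩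
  obtain ⟨s, hs, hX, hY⟩ := hn u Q R hu huc hR fun x hx => by rwa [hH x hx]
  have hs0 : 0 < s := lt_of_lt_of_le (by positivity) hs.1
  obtain ⟨D, hD, hQD, hDb, hDfr, hDO⟩ := exists_isOpen_isPreconnected_frontier
    (by rw [rank_prod', Module.rank_self]; norm_num) (isOpen_distSq_lt hu.continuous Q s)
    (show distSq u Q Q < s by simpa [distSq] using hs0)
    (fun x (hx : distSq u Q x < s) => distSq_lt_subset_ball hR.le (hx.trans hs.2))
  have hlevel : frontier D ⊆ distSq u Q ⁻¹' {s} :=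
    hDO.trans (frontier_lt_subset_eq (contDiff_distSq (hu.of_le one_le_two) Q).continuous
      continuous_const)
  have hW (x) (hx : x ∈ D) : Wgraph u x ≤ 2 * (4 * N) := Wgraph_le_of_small_oscillation hu huc hD
    (Metric.isBounded_ball.subset hDb)
    (fun x hx => hH x (Metric.ball_subset_ball (by linarith only [hR]) (hDb hx))) hQD
    (hQM.trans (le_max_left _ _))
    (fun z hz w hw => (abs_sub_lt_of_volume_image_lt hDfr
      (contDiff_tiltX hu).continuous.continuousOn hlevel hX hz hw).le)
    (fun z hz w hw => (abs_sub_lt_of_volume_image_lt hDfr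
      (contDiff_tiltY hu).continuous.continuousOn hlevel hY hz hw).le) hx
  have hball := ball_subset_of_Wgraph_le (r := R / 2 ^ n / (20 * N))
    (hu.differentiable two_ne_zero) hD hQD hW (fun z hz => (hlevel hz).ge) <| calc
      6 * (2 * (4 * N)) ^ 2 * (R / 2 ^ n / (20 * N)) ^ 2 = 24 / 25 * (R / 2 ^ n) ^ 2 := by
        field_simp
        norm_num
      _ ≤ (R / 2 ^ n) ^ 2 := mul_le_of_le_one_left (sq_nonneg _) (by norm_num)
      _ ≤ s := hs.1
  exact fun x hx => hW x (hball hx)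

end GradientEstimate

/-! ### Localisation of solutions -/

section Localisation

variable {u v : ℝ × ℝ → ℝ} {x : ℝ × ℝ}

lemma pdx_eventuallyEq (h : v =ᶠ[nhds x] u) : pdx v =ᶠ[nhds x] pdx u := by
  filter_upwards [h.fderiv (𝕜 := ℝ)] with y hy
  rw [pdx, hy, pdx]

lemma pdy_eventuallyEq (h : v =ᶠ[nhds x] u) : pdy v =ᶠ[nhds x] pdy u := by
  filter_upwards [h.fderiv (𝕜 := ℝ)] with y hy
  rw [pdy, hy, pdy]

lemma Wgraph_eq_of_eventuallyEq (h : v =ᶠ[nhds x] u) : Wgraph v x = Wgraph u x := by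
  rw [Wgraph, Wgraph, (pdx_eventuallyEq h).eq_of_nhds, (pdy_eventuallyEq h).eq_of_nhds]

/-- Since `u` is only known on `Ω`, the curvature is computed on a global extension `v` of a germ
of `u`. -/
lemma meanCurvature_eq_of_isCMCSolution {H : ℝ} {Ω : Set (ℝ × ℝ)} (hu : IsCMCSolution H Ω u)
    (hx : x ∈ Ω) (hv : ContDiff ℝ 2 v) (h : v =ᶠ[nhds x] u) : meanCurvature v x = H := by
  have hp := pdx_eventuallyEq h
  have hq := pdy_eventuallyEq h
  have hW := Wgraph_pos v x
  have hpow : (1 + pdx v x ^ 2 + pdy v x ^ 2) ^ ((3 : ℝ) / 2) = Wgraph v x ^ 3 := by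
    rw [Wgraph, Real.sqrt_eq_rpow, ← Real.rpow_natCast _ 3, ← Real.rpow_mul (by positivity)]
    norm_num
  have hcmc := hu.2 x hx
  rw [← hp.eq_of_nhds, ← hq.eq_of_nhds, ← (pdx_eventuallyEq hp).eq_of_nhds,
    ← (pdy_eventuallyEq hp).eq_of_nhds, ← (pdy_eventuallyEq hq).eq_of_nhds, hpow] at hcmc
  have hmul := (meanCurvature_mul_Wgraph_pow hv x).trans hcmc
  exact mul_left_cancel₀ two_ne_zero (mul_right_cancel₀ (pow_pos hW 3).ne' hmul)

lemma exists_contDiff_hasCompactSupport_extension {E : Type*} [NormedAddCommGroup E]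
    [NormedSpace ℝ E] [FiniteDimensional ℝ E] [HasContDiffBump E] {Ω : Set E} (hΩ : IsOpen Ω)
    {n : ℕ∞} {u : E → ℝ} (hu : ContDiffOn ℝ n u Ω) {Q : E} {r R : ℝ} (hr : 0 < r) (hrR : r < R)
    (hR : Metric.closedBall Q R ⊆ Ω) :
    ∃ v : E → ℝ, ContDiff ℝ n v ∧ HasCompactSupport v ∧
      ∀ x ∈ Metric.ball Q r, v =ᶠ[nhds x] u := by
  let χ : ContDiffBump Q := ⟨r, R, hr, hrR⟩
  refine ⟨fun x => χ x * u x, contDiff_iff_contDiffAt.2 fun x => ?_,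
    χ.hasCompactSupport.mul_right, fun x hx => ?_⟩
  · by_cases hx : x ∈ Ω
    · exact χ.contDiffAt.mul (hu.contDiffAt (hΩ.mem_nhds hx))
    · have hxχ : x ∉ tsupport χ := fun h => hx (hR (by rwa [χ.tsupport_eq] at h))
      refine (contDiffAt_const (c := (0 : ℝ))).congr_of_eventuallyEq ?_
      filter_upwards [notMem_tsupport_iff_eventuallyEq.1 hxχ] with y hy
      rw [hy, Pi.zero_apply, zero_mul]
  · filter_upwards [Metric.isOpen_ball.mem_nhds hx] with y hy
    rw [χ.one_of_mem_closedBall (Metric.ball_subset_closedBall hy), one_mul]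

end Localisation

theorem exists_Wgraph_le_of_isCMCSolution (H : ℝ) {Ω : Set (ℝ × ℝ)} (hΩ : IsOpen Ω)
    {Q : ℝ × ℝ} (hQ : Q ∈ Ω) (M : ℝ) :
    ∃ r > 0, Metric.ball Q r ⊆ Ω ∧ ∃ C, ∀ u : ℝ × ℝ → ℝ, IsCMCSolution H Ω u →
      Wgraph u Q ≤ M → ∀ x ∈ Metric.ball Q r, Wgraph u x ≤ C := by
  obtain ⟨ρ, hρ, hρΩ⟩ := Metric.nhds_basis_closedBall.mem_iff.1 (hΩ.mem_nhds hQ)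
  set R : ℝ := min (ρ / 5) (1 / (|H| + 1))
  have hR : 0 < R := by positivity
  have hRH : R * |H| ≤ 1 := by
    have hle : R * (|H| + 1) ≤ 1 := (le_div_iff₀ (by positivity)).1 (min_le_right _ _)
    linarith only [hle, hR]
  have hsub : Metric.closedBall Q (5 * R) ⊆ Ω :=
    (Metric.closedBall_subset_closedBall
      (by linarith only [min_le_left (ρ / 5) (1 / (|H| + 1))])).trans hρΩ
  have hsub4 : Metric.ball Q (4 * R) ⊆ Ω := Metric.ball_subset_closedBall.trans
    ((Metric.closedBall_subset_closedBall (by linarith only [hR])).trans hsub)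
  obtain ⟨r, hr, C, hC⟩ := exists_Wgraph_le_on_ball hR M
  refine ⟨min r (4 * R), by positivity,
    (Metric.ball_subset_ball (min_le_right _ _)).trans hsub4, C, fun u hu hM x hx => ?_⟩
  obtain ⟨v, hv, hvc, hvu⟩ := exists_contDiff_hasCompactSupport_extension hΩ (n := 2) hu.1
    (r := 4 * R) (by positivity) (by linarith only [hR]) hsub
  have hW (y) (hy : y ∈ Metric.ball Q (4 * R)) : Wgraph v y = Wgraph u y :=
    Wgraph_eq_of_eventuallyEq (hvu y hy)
  rw [← hW x (Metric.ball_subset_ball (min_le_right _ _) hx)]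
  refine hC v Q H hv hvc hRH
    (fun y hy => meanCurvature_eq_of_isCMCSolution hu (hsub4 hy) hv (hvu y hy)) ?_ x
    (Metric.ball_subset_ball (min_le_left _ _) hx)
  rwa [hW Q (Metric.mem_ball_self (by positivity))]

theorem stmt_3_general {ι : Type*} (H : ℝ) {Ω : Set (ℝ × ℝ)} (hΩ : IsOpen Ω)
    {u : ι → ℝ × ℝ → ℝ} (hu : ∀ i, IsCMCSolution H Ω (u i)) :
    IsOpen {Q ∈ Ω | ∃ M : ℝ, ∀ i, Wgraph (u i) Q ≤ M} := by
  refine Metric.isOpen_iff.2 fun Q ⟨hQ, M, hM⟩ => ?_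
  obtain ⟨r, hr, hrΩ, C, hC⟩ := exists_Wgraph_le_of_isCMCSolution H hΩ hQ M
  exact ⟨r, hr, fun x hx => ⟨hrΩ hx, C, fun i => hC (u i) (hu i) (hM i) x hx⟩⟩

/-- the convergence domain `B(u_n)` of a sequence of solutions of (CMC)
is an open subset of `ℝ²`. -/
theorem stmt_3 (H : ℝ) (hH : 0 < H) (Ω : Set (ℝ × ℝ)) (hΩ : IsOpen Ω)
    (hΩconn : IsConnected Ω) (u : ℕ → ℝ × ℝ → ℝ)
    (hu : ∀ n, IsCMCSolution H Ω (u n)) :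
    IsOpen {Q ∈ Ω | ∃ M : ℝ, ∀ n, Wgraph (u n) Q ≤ M} :=
  stmt_3_general H hΩ hu
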